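/- arXiv:math/0510150 — 2 statements merged into one kernel-verified Lean document; each statement's English description precedes it below -/
import Mathlib

section
/- Suppose the stabilizer G of (K,S) in SO(3) is infinite. Then there exists an orthonormal basis {e₁,e₂,e₃} of V such that one of the following holds: (i) (K,S) is in SO(2)-canonical form with parameters (λ,a,b) with λ > 0, and G is the group of all rotations about the axis e₁; (ii) K = 0 and Se₁ = ae₁, Se₂ = be₂, Se₃ = be₃ with a ≠ b, and G consists of all rotations about the axis e₁ together with all rotations by angle π about axes orthogonal to e₁; (iii) K = 0 and S = aI, and G = SO(3). -/
/-!
An infinite stabilizer has an infinitesimal element. `SO(3)` is bounded in the finite-dimensional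
space of endomorphisms, so the stabilizer contains elements `g ≠ 1` arbitrarily close to `1`
(`exists_small_stab`); a limit point `B` of the normalized differences `(g - 1) / ‖g - 1‖` is a
nonzero skew endomorphism which acts as a derivation of `K` and commutes with `S`
(`exists_infinitesimal`). In an orthonormal basis in which `B` is a multiple of the infinitesimal
rotation about `e 0`, the derivation identities are linear equations in the components of `K` and
`S`; together with apolarity and the symmetry of `S` they force the `SO(2)`-canonical form, with
`lam` of any sign (`exists_SO2Form`).

In that form `K` and `S` are given by formulas in `e 0` and the inner product only
(`SO2Form.K_apply`, `SO2Form.S_apply`), so every `g` fixing `e 0` preserves them. Conversely, for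
`lam ≠ 0` the cubic form takes the value `lam * (5 t ^ 3 - 3 t)` on a unit vector with
`e 0`-component `t`, and this equals its value `2 * lam` at `e 0` only for `t = 1`; hence the
stabilizer fixes `e 0`. For `lam = 0` one has `K = 0`, and if `a ≠ b` the stabilizer preserves the
eigenline of `e 0`. The sign of `lam` is changed by replacing the basis with its negative.
-/

/-!
Setting (affine hypersurfaces admitting a pointwise symmetry, algebraic part):
`V₃ = ℝ³` with its standard inner product `h = ⟪·,·⟫`.  `K` is a symmetric bilinear
map `V₃ × V₃ → V₃` whose cubic form `h(K(X,Y),Z)` is totally symmetric and which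
satisfies the apolarity condition (`K_X` trace-free), `S` is an `h`-symmetric
endomorphism.  `stab K S` is the stabilizer of the pair `(K,S)` inside `SO(3)`.
-/

noncomputable section

open scoped RealInnerProductSpace

/-- The 3-dimensional Euclidean space `ℝ³` with its standard inner product. -/
abbrev V₃ := EuclideanSpace ℝ (Fin 3)

/-- A symmetric bilinear map `K` is admissible (a difference tensor) if the cubic form
`(X,Y,Z) ↦ ⟪K X Y, Z⟫` is totally symmetric and `K_X := K X ·` is trace-free for all `X`. -/
def IsAdmissibleK (K : V₃ →ₗ[ℝ] V₃ →ₗ[ℝ] V₃) : Prop :=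
  (∀ X Y, K X Y = K Y X) ∧
  (∀ X Y Z, ⟪K X Y, Z⟫ = ⟪K X Z, Y⟫) ∧
  (∀ X, LinearMap.trace ℝ V₃ (K X) = 0)

/-- `S` is a symmetric endomorphism with respect to the inner product. -/
def IsSymmEndo (S : V₃ →ₗ[ℝ] V₃) : Prop := ∀ X Y, ⟪S X, Y⟫ = ⟪X, S Y⟫

/-- The stabilizer of the pair `(K,S)` inside `SO(3)`: all orientation-preserving
(i.e. determinant `1`) linear isometries `g` of `ℝ³` with `K(gX,gY) = g(K(X,Y))`
and `S(gX) = g(SX)` for all `X, Y`. -/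
def stab (K : V₃ →ₗ[ℝ] V₃ →ₗ[ℝ] V₃) (S : V₃ →ₗ[ℝ] V₃) : Set (V₃ ≃ₗᵢ[ℝ] V₃) :=
  {g | LinearMap.det (g.toLinearEquiv : V₃ →ₗ[ℝ] V₃) = 1 ∧
    (∀ X Y, K (g X) (g Y) = g (K X Y)) ∧ (∀ X, S (g X) = g (S X))}

/-- The matrix of `g` with respect to the orthonormal basis `e`: column `j` consists of
the coordinates of `g (e j)` in the basis `e`. -/
def matrixOf (e : OrthonormalBasis (Fin 3) ℝ V₃) (g : V₃ ≃ₗᵢ[ℝ] V₃) :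
    Matrix (Fin 3) (Fin 3) ℝ :=
  Matrix.of fun i j => ⟪e i, g (e j)⟫

/-- The standard orthonormal basis `{e₁, e₂, e₃}` of `ℝ³`. -/
def stdB : OrthonormalBasis (Fin 3) ℝ V₃ := EuclideanSpace.basisFun (Fin 3) ℝ

/-- Matrix of the rotation by angle `θ` about the first basis vector `e₁`. -/
def rotMat (θ : ℝ) : Matrix (Fin 3) (Fin 3) ℝ :=
  !![1, 0, 0; 0, Real.cos θ, -Real.sin θ; 0, Real.sin θ, Real.cos θ]

/-- Matrix of the rotation by angle `π` about the axis `cos (θ/2) e₂ + sin (θ/2) e₃`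
in the plane orthogonal to `e₁`. -/
def flipMat (θ : ℝ) : Matrix (Fin 3) (Fin 3) ℝ :=
  !![-1, 0, 0; 0, Real.cos θ, Real.sin θ; 0, Real.sin θ, -Real.cos θ]

/-- The set of all rotations about the axis `e 0` (the first vector of the basis `e`). -/
def rotSet (e : OrthonormalBasis (Fin 3) ℝ V₃) : Set (V₃ ≃ₗᵢ[ℝ] V₃) :=
  {g | ∃ θ : ℝ, matrixOf e g = rotMat θ}

/-- The set of all rotations by angle `π` about axes orthogonal to `e 0`. -/
def flipSet (e : OrthonormalBasis (Fin 3) ℝ V₃) : Set (V₃ ≃ₗᵢ[ℝ] V₃) :=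
  {g | ∃ θ : ℝ, matrixOf e g = flipMat θ}

/-- The whole of `SO(3)`, as a set of linear isometries of `ℝ³`. -/
def so3Set : Set (V₃ ≃ₗᵢ[ℝ] V₃) :=
  {g | LinearMap.det (g.toLinearEquiv : V₃ →ₗ[ℝ] V₃) = 1}

/-- Matrix of `P₁`, the rotation by angle `π` about `e₁`. -/
def P1mat : Matrix (Fin 3) (Fin 3) ℝ := !![1, 0, 0; 0, -1, 0; 0, 0, -1]

/-- Matrix of `P₂`, the rotation by angle `π` about `e₂`. -/
def P2mat : Matrix (Fin 3) (Fin 3) ℝ := !![-1, 0, 0; 0, 1, 0; 0, 0, -1]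

/-- Matrix of `P₃`, the rotation by angle `π` about `e₃`. -/
def P3mat : Matrix (Fin 3) (Fin 3) ℝ := !![-1, 0, 0; 0, -1, 0; 0, 0, 1]

/-- Matrix of `R₁`, the rotation by angle `2π/3` about `e₁`. -/
def R1mat : Matrix (Fin 3) (Fin 3) ℝ :=
  !![1, 0, 0; 0, -(1/2), -(Real.sqrt 3/2); 0, Real.sqrt 3/2, -(1/2)]

/-- Matrix of `R₃`, the rotation by angle `2π/3` about `e₃`. -/
def R3mat : Matrix (Fin 3) (Fin 3) ℝ :=
  !![-(1/2), -(Real.sqrt 3/2), 0; Real.sqrt 3/2, -(1/2), 0; 0, 0, 1]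

/-- Matrix of `Q`, the rotation by angle `2π/3` about the axis `e₁ + e₂ + e₃`
(the cyclic permutation `e₁ ↦ e₂ ↦ e₃ ↦ e₁`). -/
def Qmat : Matrix (Fin 3) (Fin 3) ℝ := !![0, 0, 1; 1, 0, 0; 0, 1, 0]

/-- The matrices of the Klein four-group `{id, P₁, P₂, P₃} ≅ Z₂ × Z₂`. -/
def kleinMatSet : Set (Matrix (Fin 3) (Fin 3) ℝ) := {1, P1mat, P2mat, P3mat}

/-- The matrices of the order-6 group `⟨P₁, R₃⟩ ≅ S₃`. -/
def s3MatSet : Set (Matrix (Fin 3) (Fin 3) ℝ) :=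
  {1, R3mat, R3mat * R3mat, P1mat, P1mat * R3mat, R3mat * P1mat}

/-- The matrices of the order-12 group `⟨P₁, P₂, Q⟩ ≅ A₄`. -/
def a4MatSet : Set (Matrix (Fin 3) (Fin 3) ℝ) :=
  {1, P1mat, P2mat, P3mat, Qmat, Qmat * Qmat,
   P1mat * Qmat, P2mat * Qmat, P3mat * Qmat,
   Qmat * Qmat * P1mat, Qmat * Qmat * P2mat, Qmat * Qmat * P3mat}

/-- The matrices of the order-3 group `{id, R₁, R₁²} ≅ Z₃`. -/
def z3MatSet : Set (Matrix (Fin 3) (Fin 3) ℝ) := {1, R1mat, R1mat * R1mat}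

/-- The matrices of the order-2 group `{id, P₁} ≅ Z₂`. -/
def z2MatSet : Set (Matrix (Fin 3) (Fin 3) ℝ) := {1, P1mat}

/-- The pair `(K,S)` is in `Z₂`-canonical form with parameters `(lam, mu, a, b, c, d)`
with respect to the orthonormal basis `e`. -/
def Z2Form (K : V₃ →ₗ[ℝ] V₃ →ₗ[ℝ] V₃) (S : V₃ →ₗ[ℝ] V₃)
    (e : OrthonormalBasis (Fin 3) ℝ V₃) (lam mu a b c d : ℝ) : Prop :=
  K (e 0) (e 0) = (2*lam) • e 0 ∧
  K (e 0) (e 1) = (-lam) • e 1 + mu • e 2 ∧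
  K (e 0) (e 2) = mu • e 1 + (-lam) • e 2 ∧
  K (e 1) (e 1) = (-lam) • e 0 ∧
  K (e 1) (e 2) = mu • e 0 ∧
  K (e 2) (e 2) = (-lam) • e 0 ∧
  S (e 0) = a • e 0 ∧ S (e 1) = b • e 1 + d • e 2 ∧ S (e 2) = d • e 1 + c • e 2

/-- The pair `(K,S)` is in `Z₃`-canonical form with parameters `(lam, mu, a, b)`
with respect to the orthonormal basis `e`. -/
def Z3Form (K : V₃ →ₗ[ℝ] V₃ →ₗ[ℝ] V₃) (S : V₃ →ₗ[ℝ] V₃)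
    (e : OrthonormalBasis (Fin 3) ℝ V₃) (lam mu a b : ℝ) : Prop :=
  K (e 0) (e 0) = (2*lam) • e 0 ∧
  K (e 0) (e 1) = (-lam) • e 1 ∧
  K (e 0) (e 2) = (-lam) • e 2 ∧
  K (e 1) (e 1) = (-lam) • e 0 + mu • e 1 ∧
  K (e 1) (e 2) = (-mu) • e 2 ∧
  K (e 2) (e 2) = (-lam) • e 0 + (-mu) • e 1 ∧
  S (e 0) = a • e 0 ∧ S (e 1) = b • e 1 ∧ S (e 2) = b • e 2

/-- The pair `(K,S)` is in `SO(2)`-canonical form with parameters `(lam, a, b)`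
with respect to the orthonormal basis `e`. -/
def SO2Form (K : V₃ →ₗ[ℝ] V₃ →ₗ[ℝ] V₃) (S : V₃ →ₗ[ℝ] V₃)
    (e : OrthonormalBasis (Fin 3) ℝ V₃) (lam a b : ℝ) : Prop :=
  K (e 0) (e 0) = (2*lam) • e 0 ∧
  K (e 0) (e 1) = (-lam) • e 1 ∧
  K (e 0) (e 2) = (-lam) • e 2 ∧
  K (e 1) (e 1) = (-lam) • e 0 ∧
  K (e 1) (e 2) = 0 ∧
  K (e 2) (e 2) = (-lam) • e 0 ∧
  S (e 0) = a • e 0 ∧ S (e 1) = b • e 1 ∧ S (e 2) = b • e 2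

/-- The pair `(K,S)` is in orthogonal-triple canonical form with parameters `(lam, a, b, c)`
with respect to the orthonormal basis `e`. -/
def OTForm (K : V₃ →ₗ[ℝ] V₃ →ₗ[ℝ] V₃) (S : V₃ →ₗ[ℝ] V₃)
    (e : OrthonormalBasis (Fin 3) ℝ V₃) (lam a b c : ℝ) : Prop :=
  K (e 0) (e 0) = 0 ∧ K (e 1) (e 1) = 0 ∧ K (e 2) (e 2) = 0 ∧
  K (e 0) (e 1) = lam • e 2 ∧
  K (e 0) (e 2) = lam • e 1 ∧
  K (e 1) (e 2) = lam • e 0 ∧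
  S (e 0) = a • e 0 ∧ S (e 1) = b • e 1 ∧ S (e 2) = c • e 2

/-- The pair `(K,S)` is in `S₃`-canonical form with parameters `(lam, a, b)`
with respect to the orthonormal basis `e`. -/
def S3Form (K : V₃ →ₗ[ℝ] V₃ →ₗ[ℝ] V₃) (S : V₃ →ₗ[ℝ] V₃)
    (e : OrthonormalBasis (Fin 3) ℝ V₃) (lam a b : ℝ) : Prop :=
  K (e 0) (e 0) = lam • e 0 ∧
  K (e 0) (e 1) = (-lam) • e 1 ∧
  K (e 1) (e 1) = (-lam) • e 0 ∧
  K (e 0) (e 2) = 0 ∧ K (e 1) (e 2) = 0 ∧ K (e 2) (e 2) = 0 ∧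
  S (e 0) = a • e 0 ∧ S (e 1) = a • e 1 ∧ S (e 2) = b • e 2

/-! ### Infinitesimal symmetries -/

/-- An infinite stabilizer contains nontrivial elements arbitrarily close to the identity: two
distinct elements `g`, `h` which are close in operator norm give the element `g⁻¹ h`. -/
theorem exists_small_stab {K : V₃ →ₗ[ℝ] V₃ →ₗ[ℝ] V₃} {S : V₃ →ₗ[ℝ] V₃}
    (hinf : (stab K S).Infinite) {ε : ℝ} (hε : 0 < ε) :
    ∃ g ∈ stab K S, (g : V₃ →L[ℝ] V₃) - 1 ≠ 0 ∧ ‖(g : V₃ →L[ℝ] V₃) - 1‖ < ε := by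
  have := hinf.to_subtype
  let u := Infinite.natEmbedding (stab K S)
  have hb : ∀ n, (((u n : V₃ ≃ₗᵢ[ℝ] V₃)) : V₃ →L[ℝ] V₃) ∈ Metric.closedBall 0 1 := by
    intro n
    rw [mem_closedBall_zero_iff]
    exact ContinuousLinearMap.opNorm_le_bound _ zero_le_one fun x => by simp
  obtain ⟨a, -, φ, hφ, hlim⟩ := (isCompact_closedBall _ _).tendsto_subseq hb
  obtain ⟨N, hN⟩ := Metric.cauchySeq_iff'.1 hlim.cauchySeq ε hε
  have hd := hN (N + 1) (Nat.le_succ N)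
  have hne : u (φ (N + 1)) ≠ u (φ N) := fun h => by
    have := hφ.injective (u.injective h)
    omega
  obtain ⟨⟨g, hg1, hgK, hgS⟩, hg⟩ : ∃ x, u (φ N) = x := ⟨_, rfl⟩
  obtain ⟨⟨h, hh1, hhK, hhS⟩, hh⟩ : ∃ x, u (φ (N + 1)) = x := ⟨_, rfl⟩
  simp only [Function.comp, hg, hh, dist_eq_norm] at hd
  rw [hg, hh] at hne
  have hgh : h ≠ g := fun e => hne (Subtype.ext e)
  refine ⟨h.trans g.symm, ⟨?_, ?_, ?_⟩, ?_, ?_⟩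
  · have : (LinearMap.det (g.symm.toLinearEquiv : V₃ →ₗ[ℝ] V₃)) = 1 := by
      have h1 : (g.symm.toLinearEquiv : V₃ →ₗ[ℝ] V₃) ∘ₗ (g.toLinearEquiv : V₃ →ₗ[ℝ] V₃)
          = LinearMap.id := by ext; simp
      have h2 := congrArg LinearMap.det h1
      rw [LinearMap.det_comp, hg1, mul_one, LinearMap.det_id] at h2
      exact h2
    have h3 : ((h.trans g.symm).toLinearEquiv : V₃ →ₗ[ℝ] V₃) =
      (g.symm.toLinearEquiv : V₃ →ₗ[ℝ] V₃) ∘ₗ (h.toLinearEquiv : V₃ →ₗ[ℝ] V₃) := by ext; simp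
    rw [h3, LinearMap.det_comp, this, hh1, mul_one]
  · intro X Y
    apply g.injective
    rw [← hgK]
    simp [hhK]
  · intro X
    apply g.injective
    rw [← hgS]
    simp [hhS]
  · intro e
    apply hgh
    ext1 x
    have := congrArg g (sub_eq_zero.1 (DFunLike.congr_fun e x))
    simpa using this
  · refine lt_of_le_of_lt (ContinuousLinearMap.opNorm_le_bound _ (norm_nonneg _) fun x => ?_) hd
    refine le_trans (le_of_eq ?_) (ContinuousLinearMap.le_opNorm _ x)
    rw [← g.norm_map]
    simp

open Filter Topology in
/-- Linearization: an infinite stabilizer yields a nonzero skew endomorphism that is a derivation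
of `K` and commutes with `S`. -/
theorem exists_infinitesimal {K : V₃ →ₗ[ℝ] V₃ →ₗ[ℝ] V₃} {S : V₃ →ₗ[ℝ] V₃}
    (hinf : (stab K S).Infinite) :
    ∃ B : V₃ →L[ℝ] V₃, B ≠ 0 ∧ (∀ X Y, ⟪B X, Y⟫ + ⟪X, B Y⟫ = 0) ∧
      (∀ X Y, K (B X) Y + K X (B Y) = B (K X Y)) ∧ ∀ X, S (B X) = B (S X) := by
  choose g hg hg0 hgε using fun n : ℕ =>
    exists_small_stab hinf (ε := 1 / ((n : ℝ) + 1)) (by positivity)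
  let D : ℕ → V₃ →L[ℝ] V₃ := fun n => (g n : V₃ →L[ℝ] V₃) - 1
  have hgD : ∀ n X, g n X = X + D n X := fun n X => by simp [D]
  let B' : ℕ → V₃ →L[ℝ] V₃ := fun n => ‖D n‖⁻¹ • D n
  have hr : ∀ n, ‖D n‖ ≠ 0 := fun n => norm_ne_zero_iff.2 (hg0 n)
  have hDB : ∀ n X, D n X = ‖D n‖ • B' n X := fun n X => by
    simp [B', smul_smul, hr n]
  have hb : ∀ n, B' n ∈ Metric.sphere (0 : V₃ →L[ℝ] V₃) 1 := fun n => by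
    rw [mem_sphere_zero_iff_norm, norm_smul, norm_inv, norm_norm, inv_mul_cancel₀ (hr n)]
  obtain ⟨B, hB, φ, hφ, hlim⟩ := (isCompact_sphere _ _).tendsto_subseq hb
  have hr0 : Tendsto (fun n => ‖D (φ n)‖) atTop (𝓝 0) :=
    (squeeze_zero (fun _ => norm_nonneg _) (fun n => (hgε n).le)
      tendsto_one_div_add_atTop_nhds_zero_nat).comp hφ.tendsto_atTop
  have hBX : ∀ X, Tendsto (fun n => B' (φ n) X) atTop (𝓝 (B X)) := fun X =>
    ((ContinuousLinearMap.apply ℝ V₃ X).continuous.tendsto B).comp hlim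
  -- Each invariance identity, divided by `‖D n‖`, is the derivation identity for the quotient up to a
  -- term of order `‖D n‖`, which vanishes in the limit.
  have hKc : Continuous fun p : V₃ × V₃ => K p.1 p.2 := by
    have : Continuous fun p : V₃ × V₃ => K.toContinuousBilinearMap p.1 p.2 := by fun_prop
    exact this
  have hSc : Continuous S := S.continuous_of_finiteDimensional
  have hKl : ∀ {x y : ℕ → V₃} {a b : V₃}, Tendsto x atTop (𝓝 a) → Tendsto y atTop (𝓝 b) →
      Tendsto (fun n => K (x n) (y n)) atTop (𝓝 (K a b)) := fun hx hy =>
    (hKc.tendsto _).comp (hx.prodMk_nhds hy)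
  refine ⟨B, ?_, fun X Y => ?_, fun X Y => ?_, fun X => ?_⟩
  · rintro rfl
    simp at hB
  · have h1 : ∀ n, ⟪B' n X, Y⟫ + ⟪X, B' n Y⟫ + ‖D n‖ * ⟪B' n X, B' n Y⟫ = 0 := fun n => by
      have := (g n).inner_map_map X Y
      rw [hgD, hgD, hDB, hDB] at this
      simp only [inner_add_left, inner_add_right, real_inner_smul_left,
        real_inner_smul_right] at this
      apply mul_left_cancel₀ (hr n)
      linear_combination this
    have h2 := (((hBX X).inner (tendsto_const_nhds (x := Y))).add
      ((tendsto_const_nhds (x := X)).inner (hBX Y))).add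
      (hr0.mul ((hBX X).inner (hBX Y)) : Tendsto _ _ (𝓝 (_ * ⟪B X, B Y⟫)))
    simp only [h1, zero_mul, add_zero] at h2
    exact tendsto_nhds_unique h2 tendsto_const_nhds
  · have h1 : ∀ n, K (B' n X) Y + K X (B' n Y) + ‖D n‖ • K (B' n X) (B' n Y) = B' n (K X Y) :=
      fun n => by
      have := (hg n).2.1 X Y
      rw [hgD, hgD, hgD, hDB, hDB, hDB] at this
      simp only [map_add, map_smul, LinearMap.add_apply, LinearMap.smul_apply] at this
      apply smul_right_injective _ (hr n)
      simp only [smul_add]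
      rw [← add_left_cancel_iff (a := K X Y), ← this]
      module
    have h2 := ((hKl (hBX X) (tendsto_const_nhds (x := Y))).add
      (hKl (tendsto_const_nhds (x := X)) (hBX Y))).add
      (hr0.smul (hKl (hBX X) (hBX Y)))
    simp only [h1, zero_smul, add_zero] at h2
    exact tendsto_nhds_unique h2 (hBX _)
  · have h1 : ∀ n, S (B' n X) = B' n (S X) := fun n => by
      have := (hg n).2.2 X
      rw [hgD, hgD, hDB, hDB] at this
      simp only [map_add, map_smul] at this
      exact smul_right_injective _ (hr n) (add_left_cancel this)
    have h2 := (hSc.tendsto _).comp (hBX X)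
    simp only [Function.comp_def, h1] at h2
    exact tendsto_nhds_unique h2 (hBX _)

/-! ### The canonical form -/

/-- A nonzero skew endomorphism of `ℝ³` is, in a suitable orthonormal basis, a nonzero multiple of
the infinitesimal rotation about the first basis vector. -/
theorem exists_adapted_basis {B : V₃ →L[ℝ] V₃} (hB0 : B ≠ 0)
    (hB : ∀ X Y, ⟪B X, Y⟫ + ⟪X, B Y⟫ = 0) :
    ∃ (e : OrthonormalBasis (Fin 3) ℝ V₃) (β : ℝ), β ≠ 0 ∧
      B (e 0) = 0 ∧ B (e 1) = β • e 2 ∧ B (e 2) = (-β) • e 1 := by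
  -- A skew endomorphism in odd dimension is singular.
  have hdet : LinearMap.det (B : V₃ →ₗ[ℝ] V₃) = 0 := by
    have hM : (LinearMap.toMatrix stdB.toBasis stdB.toBasis (B : V₃ →ₗ[ℝ] V₃)).transpose =
        - LinearMap.toMatrix stdB.toBasis stdB.toBasis (B : V₃ →ₗ[ℝ] V₃) := by
      ext i j
      have := hB (stdB i) (stdB j)
      simp only [Matrix.transpose_apply, Matrix.neg_apply, LinearMap.toMatrix_apply,
        OrthonormalBasis.coe_toBasis, OrthonormalBasis.coe_toBasis_repr_apply,
        OrthonormalBasis.repr_apply_apply, ContinuousLinearMap.coe_coe]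
      rw [real_inner_comm]
      linarith
    have h := congrArg Matrix.det hM
    rw [Matrix.det_transpose, Matrix.det_neg, LinearMap.det_toMatrix] at h
    norm_num at h
    linarith
  obtain ⟨v, hv, hv0⟩ := (Submodule.ne_bot_iff _).1 (LinearMap.bot_lt_ker_of_det_eq_zero hdet).ne'
  have hw : ‖(‖v‖⁻¹ • v)‖ = 1 := by
    rw [norm_smul, norm_inv, norm_norm, inv_mul_cancel₀ (norm_ne_zero_iff.2 hv0)]
  obtain ⟨e, he⟩ := Orthonormal.exists_orthonormalBasis_extension_of_card_eq (𝕜 := ℝ) (E := V₃)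
    (ι := Fin 3) (by simp) (v := fun _ => ‖v‖⁻¹ • v) (s := {0})
    ⟨fun i => hw, fun i j hij => absurd (Subsingleton.elim i j) hij⟩
  have he0 : B (e 0) = 0 := by
    have : B v = 0 := hv
    rw [he 0 rfl, map_smul, this, smul_zero]
  have hij : ∀ i j, ⟪e i, B (e j)⟫ = -⟪e j, B (e i)⟫ := fun i j => by
    have := hB (e i) (e j)
    rw [real_inner_comm] at this
    linarith
  have hii : ∀ i, ⟪e i, B (e i)⟫ = 0 := fun i => by linarith [hij i i]
  have h1 : B (e 1) = ⟪e 2, B (e 1)⟫ • e 2 := by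
    conv_lhs => rw [← e.sum_repr' (B (e 1))]
    simp [Fin.sum_univ_three, hii, hij 0 1, he0]
  have h2 : B (e 2) = (-⟪e 2, B (e 1)⟫) • e 1 := by
    conv_lhs => rw [← e.sum_repr' (B (e 2))]
    simp [Fin.sum_univ_three, hii, hij 0 2, hij 1 2, he0]
  refine ⟨e, ⟪e 2, B (e 1)⟫, fun h => hB0 ?_, he0, h1, h2⟩
  rw [h] at h1 h2
  ext1 X
  rw [← e.sum_repr' X]
  simp [Fin.sum_univ_three, he0, h1, h2]

/-- With an infinite stabilizer, `(K, S)` has the `SO(2)`-canonical form in some orthonormal basis;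
here `lam` may have any sign or vanish. -/
theorem exists_SO2Form {K : V₃ →ₗ[ℝ] V₃ →ₗ[ℝ] V₃} {S : V₃ →ₗ[ℝ] V₃}
    (hK : IsAdmissibleK K) (hS : IsSymmEndo S) (hinf : (stab K S).Infinite) :
    ∃ (e : OrthonormalBasis (Fin 3) ℝ V₃) (lam a b : ℝ), SO2Form K S e lam a b := by
  obtain ⟨B, hB0, hB, hBK, hBS⟩ := exists_infinitesimal hinf
  obtain ⟨e, β, hβ, h0, h1, h2⟩ := exists_adapted_basis hB0 hB
  obtain ⟨hK1, hK2, hK3⟩ := hK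
  have hext : ∀ x y : V₃, ⟪x, e 0⟫ = ⟪y, e 0⟫ → ⟪x, e 1⟫ = ⟪y, e 1⟫ → ⟪x, e 2⟫ = ⟪y, e 2⟫ →
      x = y := fun x y p q r => by
    rw [← e.sum_repr' x, ← e.sum_repr' y]
    simp only [Fin.sum_univ_three, real_inner_comm x, real_inner_comm y, p, q, r]
  have on : ∀ i j, ⟪e i, e j⟫ = if i = j then (1 : ℝ) else 0 := fun i j =>
    orthonormal_iff_ite.1 e.orthonormal i j
  have C : ∀ X Y Z, ⟪K (B X) Y, Z⟫ + ⟪K X (B Y), Z⟫ + ⟪K X Y, B Z⟫ = 0 := fun X Y Z => by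
    have := hB (K X Y) Z
    rwa [← hBK, inner_add_left] at this
  have Q : ∀ X Y, ⟪S (B X), Y⟫ + ⟪S X, B Y⟫ = 0 := fun X Y => by
    rw [hBS, hB]
  have tr : ⟪K (e 0) (e 0), e 0⟫ + ⟪K (e 0) (e 1), e 1⟫ + ⟪K (e 0) (e 2), e 2⟫ = 0 := by
    have := hK3 (e 0)
    rw [LinearMap.trace_eq_sum_inner _ e, Fin.sum_univ_three] at this
    simpa only [real_inner_comm] using this
  -- The symmetries reduce all components to those with nondecreasing indices; the equations `C...`
  -- and `Q...` then form a linear system for the components of `K` and `S`.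
  have s10 := hK1 (e 1) (e 0)
  have s20 := hK1 (e 2) (e 0)
  have s21 := hK1 (e 2) (e 1)
  have t010 := hK2 (e 0) (e 1) (e 0)
  have t020 := hK2 (e 0) (e 2) (e 0)
  have t021 := hK2 (e 0) (e 2) (e 1)
  have t110 := hK2 (e 1) (e 1) (e 0)
  have t120 := hK2 (e 1) (e 2) (e 0)
  have t121 := hK2 (e 1) (e 2) (e 1)
  have t220 := hK2 (e 2) (e 2) (e 0)
  have t221 := hK2 (e 2) (e 2) (e 1)
  have y10 := (hS (e 1) (e 0)).trans (real_inner_comm _ _)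
  have y20 := (hS (e 2) (e 0)).trans (real_inner_comm _ _)
  have y21 := (hS (e 2) (e 1)).trans (real_inner_comm _ _)
  have C001 := C (e 0) (e 0) (e 1)
  have C002 := C (e 0) (e 0) (e 2)
  have C011 := C (e 0) (e 1) (e 1)
  have C012 := C (e 0) (e 1) (e 2)
  have C111 := C (e 1) (e 1) (e 1)
  have C112 := C (e 1) (e 1) (e 2)
  have C122 := C (e 1) (e 2) (e 2)
  have C222 := C (e 2) (e 2) (e 2)
  have Q01 := Q (e 0) (e 1)
  have Q02 := Q (e 0) (e 2)
  have Q11 := Q (e 1) (e 1)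
  have Q12 := Q (e 1) (e 2)
  simp only [s10, s20, s21] at t110 t120 t121 t220 t221
  simp only [h0, h1, h2, map_zero, map_smul, LinearMap.zero_apply, LinearMap.smul_apply,
    inner_zero_left, real_inner_smul_left, real_inner_smul_right, s21, neg_mul,
    ← mul_neg, ← mul_add, zero_add, add_zero, neg_eq_zero, mul_eq_zero, hβ, false_or] at C001 C002 C011 C012 C111 C112 C122 C222 Q01 Q02 Q11 Q12
  refine ⟨e, ⟪K (e 0) (e 0), e 0⟫ / 2, ⟪S (e 0), e 0⟫, ⟪S (e 1), e 1⟫,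
    ?_, ?_, ?_, ?_, ?_, ?_, ?_, ?_, ?_⟩ <;>
  · apply hext <;> simp [real_inner_smul_left, on] <;> linarith

/-! ### Rotations and flips in terms of the axis -/

theorem exists_cos_sin {c s : ℝ} (h : c ^ 2 + s ^ 2 = 1) :
    ∃ θ : ℝ, c = Real.cos θ ∧ s = Real.sin θ := by
  have hn : ‖(⟨c, s⟩ : ℂ)‖ = 1 := by
    rw [Complex.norm_eq_sqrt_sq_add_sq, h, Real.sqrt_one]
  refine ⟨Complex.arg ⟨c, s⟩, ?_, ?_⟩
  · simpa [hn] using (Complex.norm_mul_cos_arg ⟨c, s⟩).symm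
  · simpa [hn] using (Complex.norm_mul_sin_arg ⟨c, s⟩).symm

theorem det_matrixOf (e : OrthonormalBasis (Fin 3) ℝ V₃) (g : V₃ ≃ₗᵢ[ℝ] V₃) :
    (matrixOf e g).det = LinearMap.det (g.toLinearEquiv : V₃ →ₗ[ℝ] V₃) := by
  rw [← LinearMap.det_toMatrix e.toBasis]
  congr 1
  ext i j
  simp [matrixOf, LinearMap.toMatrix_apply, OrthonormalBasis.repr_apply_apply]

/-- The columns of `matrixOf e g` are orthonormal. -/
theorem gram_matrixOf (e : OrthonormalBasis (Fin 3) ℝ V₃) (g : V₃ ≃ₗᵢ[ℝ] V₃) (i j : Fin 3) :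
    matrixOf e g 0 i * matrixOf e g 0 j + matrixOf e g 1 i * matrixOf e g 1 j
      + matrixOf e g 2 i * matrixOf e g 2 j = if i = j then 1 else 0 := by
  rw [← orthonormal_iff_ite.1 e.orthonormal i j, ← g.inner_map_map,
    ← e.sum_inner_mul_inner (g (e i)) (g (e j)), Fin.sum_univ_three]
  simp only [matrixOf, Matrix.of_apply, real_inner_comm]

theorem rotSet_eq (e : OrthonormalBasis (Fin 3) ℝ V₃) :
    rotSet e = {g | LinearMap.det (g.toLinearEquiv : V₃ →ₗ[ℝ] V₃) = 1 ∧ g (e 0) = e 0} := by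
  ext g
  simp only [rotSet, Set.mem_ofPred_eq, ← det_matrixOf e]
  constructor
  · rintro ⟨θ, h⟩
    constructor
    · rw [h, rotMat, Matrix.det_fin_three]
      simp
      linear_combination Real.sin_sq_add_cos_sq θ
    · rw [← e.sum_repr' (g (e 0)), Fin.sum_univ_three]
      have h' := fun i => congrFun (congrFun h i) 0
      simp only [matrixOf, Matrix.of_apply] at h'
      simp [h', rotMat]
  · rintro ⟨hd, h0⟩
    have m : ∀ i, matrixOf e g i 0 = if i = 0 then 1 else 0 := fun i => by
      rw [matrixOf, Matrix.of_apply, h0, orthonormal_iff_ite.1 e.orthonormal]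
    have G := gram_matrixOf e g
    generalize matrixOf e g = M at *
    have g01 := G 0 1
    have g02 := G 0 2
    have g11 := G 1 1
    have g12 := G 1 2
    have g22 := G 2 2
    rw [Matrix.det_fin_three] at hd
    simp [m] at g01 g02 g11 g12 g22 hd
    simp only [g01, g02] at g11 g12 g22 hd
    -- The lower block has orthonormal columns and determinant `1`.
    have hs : (M 1 1 - M 2 2) ^ 2 + (M 1 2 + M 2 1) ^ 2 = 0 := by
      linear_combination g11 + g22 - 2 * hd
    have e1 : M 2 2 = M 1 1 := by nlinarith [sq_nonneg (M 1 1 - M 2 2), sq_nonneg (M 1 2 + M 2 1)]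
    have e2 : M 1 2 = - M 2 1 := by
      nlinarith [sq_nonneg (M 1 1 - M 2 2), sq_nonneg (M 1 2 + M 2 1)]
    obtain ⟨θ, hc, hs⟩ := exists_cos_sin (c := M 1 1) (s := M 2 1) (by linarith)
    refine ⟨θ, ?_⟩
    ext i j
    fin_cases i <;> fin_cases j <;> simp [rotMat, m, g01, g02, e1, e2, hc, hs]

theorem flipSet_eq (e : OrthonormalBasis (Fin 3) ℝ V₃) :
    flipSet e = {g | LinearMap.det (g.toLinearEquiv : V₃ →ₗ[ℝ] V₃) = 1 ∧ g (e 0) = -e 0} := by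
  ext g
  simp only [flipSet, Set.mem_ofPred_eq, ← det_matrixOf e]
  constructor
  · rintro ⟨θ, h⟩
    constructor
    · rw [h, flipMat, Matrix.det_fin_three]
      simp
      linear_combination Real.sin_sq_add_cos_sq θ
    · rw [← e.sum_repr' (g (e 0)), Fin.sum_univ_three]
      have h' := fun i => congrFun (congrFun h i) 0
      simp only [matrixOf, Matrix.of_apply] at h'
      simp [h', flipMat]
  · rintro ⟨hd, h0⟩
    have m : ∀ i, matrixOf e g i 0 = if i = 0 then -1 else 0 := fun i => by
      rw [matrixOf, Matrix.of_apply, h0, inner_neg_right, orthonormal_iff_ite.1 e.orthonormal]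
      split_ifs <;> simp
    have G := gram_matrixOf e g
    generalize matrixOf e g = M at *
    have g01 := G 0 1
    have g02 := G 0 2
    have g11 := G 1 1
    have g12 := G 1 2
    have g22 := G 2 2
    rw [Matrix.det_fin_three] at hd
    simp [m] at g01 g02 g11 g12 g22 hd
    simp only [g01, g02] at g11 g12 g22 hd
    -- The lower block has orthonormal columns and determinant `-1`.
    have hs : (M 1 1 + M 2 2) ^ 2 + (M 1 2 - M 2 1) ^ 2 = 0 := by
      linear_combination g11 + g22 - 2 * hd
    have e1 : M 2 2 = -M 1 1 := by
      nlinarith [sq_nonneg (M 1 1 + M 2 2), sq_nonneg (M 1 2 - M 2 1)]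
    have e2 : M 1 2 = M 2 1 := by
      nlinarith [sq_nonneg (M 1 1 + M 2 2), sq_nonneg (M 1 2 - M 2 1)]
    obtain ⟨θ, hc, hs⟩ := exists_cos_sin (c := M 1 1) (s := M 2 1) (by linarith)
    refine ⟨θ, ?_⟩
    ext i j
    fin_cases i <;> fin_cases j <;> simp [flipMat, m, g01, g02, e1, e2, hc, hs]

/-! ### Stabilizers of canonical forms -/

section CanonicalForm

variable {K : V₃ →ₗ[ℝ] V₃ →ₗ[ℝ] V₃} {S : V₃ →ₗ[ℝ] V₃} {e : OrthonormalBasis (Fin 3) ℝ V₃}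
  {lam a b : ℝ}

/-- Basis-free expression of `K`, involving only `e 0` and the inner product. -/
theorem SO2Form.K_apply (hK : IsAdmissibleK K) (h : SO2Form K S e lam a b) (X Y : V₃) :
    K X Y = lam • ((5 * ⟪e 0, X⟫ * ⟪e 0, Y⟫ - ⟪X, Y⟫) • e 0 - ⟪e 0, X⟫ • Y - ⟪e 0, Y⟫ • X) := by
  obtain ⟨k00, k01, k02, k11, k12, k22, -, -, -⟩ := h
  have k10 := (hK.1 (e 1) (e 0)).trans k01
  have k20 := (hK.1 (e 2) (e 0)).trans k02
  have k21 := (hK.1 (e 2) (e 1)).trans k12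
  have hX := e.sum_repr' X
  have hY := e.sum_repr' Y
  have hXY := e.sum_inner_mul_inner X Y
  rw [Fin.sum_univ_three] at hX hY hXY
  rw [← hXY]
  simp only [real_inner_comm _ X]
  generalize ⟪e 0, X⟫ = x0, ⟪e 1, X⟫ = x1, ⟪e 2, X⟫ = x2, ⟪e 0, Y⟫ = y0, ⟪e 1, Y⟫ = y1,
    ⟪e 2, Y⟫ = y2 at *
  rw [← hX, ← hY]
  simp only [map_add, map_smul, LinearMap.add_apply, LinearMap.smul_apply, k00, k01, k02, k10, k11,
    k12, k20, k21, k22]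
  module

theorem SO2Form.S_apply (h : SO2Form K S e lam a b) (X : V₃) :
    S X = b • X + ((a - b) * ⟪e 0, X⟫) • e 0 := by
  obtain ⟨-, -, -, -, -, -, s0, s1, s2⟩ := h
  have hX := e.sum_repr' X
  rw [Fin.sum_univ_three] at hX
  generalize ⟪e 0, X⟫ = x0, ⟪e 1, X⟫ = x1, ⟪e 2, X⟫ = x2 at *
  rw [← hX]
  simp only [map_add, map_smul, s0, s1, s2]
  module

/-- Replacing every basis vector by its negative changes the sign of `lam`. -/
theorem SO2Form.neg (h : SO2Form K S e lam a b) :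
    SO2Form K S (e.map (LinearIsometryEquiv.neg ℝ)) (-lam) a b := by
  obtain ⟨k00, k01, k02, k11, k12, k22, s0, s1, s2⟩ := h
  refine ⟨?_, ?_, ?_, ?_, ?_, ?_, ?_, ?_, ?_⟩ <;>
    simp [k00, k01, k02, k11, k12, k22, s0, s1, s2]

theorem SO2Form.stab_eq_rotSet (hK : IsAdmissibleK K) (h : SO2Form K S e lam a b)
    (hlam : lam ≠ 0) : stab K S = rotSet e := by
  rw [rotSet_eq]
  ext g
  refine ⟨fun ⟨hd, hgK, _⟩ => ⟨hd, ?_⟩, fun ⟨hd, h0⟩ => ⟨hd, fun X Y => ?_, fun X => ?_⟩⟩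
  -- With `t = ⟪e 0, g (e 0)⟫`, invariance of the cubic form at `e 0` reads `5 t ^ 3 - 3 t = 2`.
  · have h1 : ⟪K (g (e 0)) (g (e 0)), g (e 0)⟫ = ⟪K (e 0) (e 0), e 0⟫ := by
      rw [hgK, g.inner_map_map]
    have h00 : ⟪e 0, e 0⟫ = (1 : ℝ) := by simp
    simp only [h.K_apply hK, g.inner_map_map, real_inner_smul_left, inner_sub_left, h00] at h1
    have h2 := mul_left_cancel₀ hlam h1
    have ht : ⟪e 0, g (e 0)⟫ = (1 : ℝ) := by
      generalize ⟪e 0, g (e 0)⟫ = t at h2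
      have h3 : (t - 1) * (5 * t ^ 2 + 5 * t + 2) = 0 := by linear_combination h2
      have h4 : 5 * t ^ 2 + 5 * t + 2 ≠ 0 := by nlinarith [sq_nonneg (2 * t + 1)]
      linarith [(mul_eq_zero.1 h3).resolve_right h4]
    exact ((inner_eq_one_iff_of_norm_eq_one (by simp) (by simp)).1 ht).symm
  · have hx : ∀ X, ⟪e 0, g X⟫ = ⟪e 0, X⟫ := fun X => by
      rw [← g.inner_map_map (e 0) X, h0]
    simp only [h.K_apply hK, hx, g.inner_map_map, map_smul, map_sub, h0]
  · have hx : ∀ X, ⟪e 0, g X⟫ = ⟪e 0, X⟫ := fun X => by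
      rw [← g.inner_map_map (e 0) X, h0]
    simp only [h.S_apply, hx, map_smul, map_add, h0]

theorem SO2Form.stab_eq_rotSet_union_flipSet (h : SO2Form 0 S e lam a b)
    (hab : a ≠ b) : stab 0 S = rotSet e ∪ flipSet e := by
  rw [rotSet_eq, flipSet_eq]
  ext g
  constructor
  · rintro ⟨hd, -, hgS⟩
    have h1 := hgS (e 0)
    have h00 : ⟪e 0, e 0⟫ = (1 : ℝ) := by simp
    simp only [h.S_apply, h00, mul_one, map_add, map_smul] at h1
    have h2 := add_left_cancel h1
    rw [mul_smul] at h2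
    have h3 := smul_right_injective V₃ (sub_ne_zero.2 hab) h2
    have h4 : ‖g (e 0)‖ = 1 := by simp
    rw [← h3, norm_smul, e.orthonormal.1, mul_one, Real.norm_eq_abs] at h4
    rcases eq_or_eq_neg_of_abs_eq h4 with h5 | h5 <;> rw [h5] at h3
    · exact Or.inl ⟨hd, by simpa using h3.symm⟩
    · exact Or.inr ⟨hd, by simpa using h3.symm⟩
  · rintro (⟨hd, h0⟩ | ⟨hd, h0⟩)
    · refine ⟨hd, by simp, fun X => ?_⟩
      have hx : ⟪e 0, g X⟫ = ⟪e 0, X⟫ := by rw [← g.inner_map_map (e 0) X, h0]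
      simp only [h.S_apply, hx, map_smul, map_add, h0]
    · refine ⟨hd, by simp, fun X => ?_⟩
      have hx : ⟪e 0, g X⟫ = -⟪e 0, X⟫ := by
        rw [← g.inner_map_map (e 0) X, h0, inner_neg_left, neg_neg]
      simp only [h.S_apply, hx, map_smul, map_add, h0, smul_neg, mul_neg, neg_smul]

end CanonicalForm

/-- Lemma 2.4: if the stabilizer of `(K,S)` in `SO(3)` is infinite, then
in a suitable orthonormal basis either `(K,S)` is in `SO(2)`-canonical form with `λ > 0` and
the stabilizer consists of all rotations about `e₁`, or `K = 0` with `S` having a double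
eigenvalue and the stabilizer is `Z₂ × SO(2)` (rotations about `e₁` together with the
rotations by `π` about axes orthogonal to `e₁`), or `K = 0`, `S = aI` and the stabilizer is
all of `SO(3)`. -/
theorem statement_4 (K : V₃ →ₗ[ℝ] V₃ →ₗ[ℝ] V₃) (S : V₃ →ₗ[ℝ] V₃)
    (hK : IsAdmissibleK K) (hS : IsSymmEndo S)
    (hinf : (stab K S).Infinite) :
    ∃ e : OrthonormalBasis (Fin 3) ℝ V₃,
      (∃ lam a b : ℝ, 0 < lam ∧ SO2Form K S e lam a b ∧
        stab K S = rotSet e) ∨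
      (K = 0 ∧ ∃ a b : ℝ, a ≠ b ∧
        S (e 0) = a • e 0 ∧ S (e 1) = b • e 1 ∧ S (e 2) = b • e 2 ∧
        stab K S = rotSet e ∪ flipSet e) ∨
      (K = 0 ∧ ∃ a : ℝ, S = a • (LinearMap.id : V₃ →ₗ[ℝ] V₃) ∧
        stab K S = so3Set) := by
  obtain ⟨e, lam, a, b, h⟩ := exists_SO2Form hK hS hinf
  rcases lt_trichotomy lam 0 with hl | rfl | hl
  · exact ⟨e.map (LinearIsometryEquiv.neg ℝ), Or.inl ⟨-lam, a, b, neg_pos.2 hl, h.neg,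
      h.neg.stab_eq_rotSet hK (neg_ne_zero.2 hl.ne)⟩⟩
  · have hK0 : K = 0 := by
      ext1 X
      ext1 Y
      rw [h.K_apply hK, zero_smul, LinearMap.zero_apply, LinearMap.zero_apply]
    subst hK0
    refine ⟨e, Or.inr ?_⟩
    by_cases hab : a = b
    · subst hab
      have hSa : S = a • (LinearMap.id : V₃ →ₗ[ℝ] V₃) := by
        ext1 X
        simp [h.S_apply]
      refine Or.inr ⟨rfl, a, hSa, ?_⟩
      ext g
      simp [stab, so3Set, hSa]
    · obtain ⟨-, -, -, -, -, -, s0, s1, s2⟩ := id h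
      exact Or.inl ⟨rfl, a, b, hab, s0, s1, s2, h.stab_eq_rotSet_union_flipSet hab⟩
  · exact ⟨e, Or.inl ⟨lam, a, b, hl, h, h.stab_eq_rotSet hK hl.ne'⟩⟩
end
end

section
/- Suppose the stabilizer of (K,S) in SO(3) is nontrivial. Then there exists an orthonormal basis {e₁,e₂,e₃} of V such that one of the following holds: (i) K = 0 and S = aI; (ii) K = 0 and Se₁=ae₁, Se₂=be₂, Se₃=be₃ with a ≠ b; (iii) (K,S) is in SO(2)-canonical form with parameters (λ,a,b), λ > 0; (iv) (K,S) is in orthogonal-triple canonical form with parameters (λ,a,a,a), λ > 0; (v) (K,S) is in S₃-canonical form with parameters (λ,a,b), λ > 0; (vi) (K,S) is in orthogonal-triple canonical form with parameters (λ,a,b,c), where a,b,c are not all equal if λ > 0 and a,b,c are pairwise distinct if λ = 0; (vii) (K,S) is in Z₃-canonical form with parameters (λ,μ,a,b), where either λ > 0, μ > 0, μ ≠ √2·λ, or μ = √2·λ > 0 and a ≠ b; (viii) (K,S) is in Z₂-canonical form with parameters (λ,μ,a,b,c,d), where either λ > 0, μ > 0, λ ≠ μ, or λ = μ > 0 and (b−c)²+(b+c−2a−2d)²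 ≠ 0, or λ = 0, μ > 0, d ≠ 0, or μ = 0, λ > 0, (b−c)²+d² ≠ 0. -/
/-!
A nontrivial rotation `g` in the stabilizer has an axis (`exists_axis`), so some orthonormal basis
makes `g` a rotation about `e 0` with cosine `c ≠ 1` (`exists_rotation_basis`). Decompose the
components of the trace-free cubic form `h(K(X,Y),Z)` and of `S` by weight under rotations about
`e 0`: weights `0` to `3` occur in `K`, weights `0` to `2` in `S`. Invariance under `g` kills
weight `1`; if `g` is a half-turn it also kills weight `3`, and otherwise it kills weight `2`
(`comps_of_invariant`).

In the half-turn case the weight-two part of `K` is a plane quadratic form of trace zero, and a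
rotation of `e 1, e 2` makes it off-diagonal; this is the `Z₂`-form (`exists_Z2Form`). Otherwise
the weight-three part of `K` is a plane harmonic cubic, and a rotation makes it a multiple of
`x³ - 3xy²`; this is the `Z₃`-form (`exists_Z3Form`). Both rotations come from a square or cube
root of a complex number (`exists_unit_root`), and a sign change of `e 0` gives `λ ≥ 0`.

It remains to treat the parameter values excluded in the `Z₂`- and `Z₃`-forms
(`canonical_of_Z2Form`, `canonical_of_Z3Form`). If `K = 0`, the spectral theorem applies to `S`.
If one parameter vanishes, the form is already one of the more symmetric ones up to relabelling
the basis. Two cases need a new basis: `λ = μ` in the `Z₂`-form, where the cubic is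
`2λ(x³ - 3xv²)`, and `μ = √2 λ` in the `Z₃`-form, where the cubic is a product of three mutually
orthogonal linear forms.
-/

/-!
Setting (affine hypersurfaces admitting a pointwise symmetry, algebraic part):
`V₃ = ℝ³` with its standard inner product `h = ⟪·,·⟫`.  `K` is a symmetric bilinear
map `V₃ × V₃ → V₃` whose cubic form `h(K(X,Y),Z)` is totally symmetric and which
satisfies the apolarity condition (`K_X` trace-free), `S` is an `h`-symmetric
endomorphism.  `stab K S` is the stabilizer of the pair `(K,S)` inside `SO(3)`.
-/

noncomputable section

open scoped RealInnerProductSpace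

/-! ### Components of `K` and `S` in an orthonormal basis -/

/-- The components `h(K(eᵢ,eⱼ),eₖ)` of the cubic form in the basis `e`. -/
def cub (K : V₃ →ₗ[ℝ] V₃ →ₗ[ℝ] V₃) (e : OrthonormalBasis (Fin 3) ℝ V₃)
    (i j k : Fin 3) : ℝ := ⟪K (e i) (e j), e k⟫

/-- The components `h(S eᵢ, eⱼ)` of the shape operator in the basis `e`. -/
def quad (S : V₃ →ₗ[ℝ] V₃) (e : OrthonormalBasis (Fin 3) ℝ V₃) (i j : Fin 3) : ℝ :=
  ⟪S (e i), e j⟫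

lemma vec_expand (e : OrthonormalBasis (Fin 3) ℝ V₃) (v : V₃) :
    v = ⟪v, e 0⟫ • e 0 + ⟪v, e 1⟫ • e 1 + ⟪v, e 2⟫ • e 2 := by
  conv_lhs => rw [← e.sum_repr' v]
  simp [Fin.sum_univ_three, real_inner_comm]

lemma K_expand (K : V₃ →ₗ[ℝ] V₃ →ₗ[ℝ] V₃) (e : OrthonormalBasis (Fin 3) ℝ V₃) (i j : Fin 3) :
    K (e i) (e j) = cub K e i j 0 • e 0 + cub K e i j 1 • e 1 + cub K e i j 2 • e 2 :=
  vec_expand e _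

lemma S_expand (S : V₃ →ₗ[ℝ] V₃) (e : OrthonormalBasis (Fin 3) ℝ V₃) (i : Fin 3) :
    S (e i) = quad S e i 0 • e 0 + quad S e i 1 • e 1 + quad S e i 2 • e 2 :=
  vec_expand e _

lemma quad_symm {S : V₃ →ₗ[ℝ] V₃} (hS : IsSymmEndo S) (e : OrthonormalBasis (Fin 3) ℝ V₃)
    (i j : Fin 3) : quad S e i j = quad S e j i := by
  unfold quad
  rw [hS, real_inner_comm]

/-- Every component of a totally symmetric cubic form equals one with sorted indices. -/
lemma cub_symm {K : V₃ →ₗ[ℝ] V₃ →ₗ[ℝ] V₃} (hK : IsAdmissibleK K)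
    (e : OrthonormalBasis (Fin 3) ℝ V₃) :
    cub K e 0 1 0 = cub K e 0 0 1 ∧ cub K e 1 0 0 = cub K e 0 0 1 ∧
    cub K e 0 2 0 = cub K e 0 0 2 ∧ cub K e 2 0 0 = cub K e 0 0 2 ∧
    cub K e 1 0 1 = cub K e 0 1 1 ∧ cub K e 1 1 0 = cub K e 0 1 1 ∧
    cub K e 2 0 2 = cub K e 0 2 2 ∧ cub K e 2 2 0 = cub K e 0 2 2 ∧
    cub K e 0 2 1 = cub K e 0 1 2 ∧ cub K e 1 0 2 = cub K e 0 1 2 ∧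
    cub K e 1 2 0 = cub K e 0 1 2 ∧ cub K e 2 0 1 = cub K e 0 1 2 ∧
    cub K e 2 1 0 = cub K e 0 1 2 ∧
    cub K e 1 2 1 = cub K e 1 1 2 ∧ cub K e 2 1 1 = cub K e 1 1 2 ∧
    cub K e 2 1 2 = cub K e 1 2 2 ∧ cub K e 2 2 1 = cub K e 1 2 2 := by
  have h1 : ∀ i j k, cub K e i j k = cub K e j i k := fun i j k => by
    unfold cub; rw [hK.1]
  have h2 : ∀ i j k, cub K e i j k = cub K e i k j := fun i j k => hK.2.1 _ _ _
  refine ⟨?_, ?_, ?_, ?_, ?_, ?_, ?_, ?_, ?_, ?_, ?_, ?_, ?_, ?_, ?_, ?_, ?_⟩ <;> grind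

lemma cub_trace {K : V₃ →ₗ[ℝ] V₃ →ₗ[ℝ] V₃} (hK : IsAdmissibleK K)
    (e : OrthonormalBasis (Fin 3) ℝ V₃) (i : Fin 3) :
    cub K e i 0 0 + cub K e i 1 1 + cub K e i 2 2 = 0 := by
  have h := hK.2.2 (e i)
  rw [LinearMap.trace_eq_sum_inner _ e] at h
  simpa [Fin.sum_univ_three, cub, real_inner_comm] using h

/-! ### Change of orthonormal basis -/

lemma exists_basis (e : OrthonormalBasis (Fin 3) ℝ V₃) (M : Matrix (Fin 3) (Fin 3) ℝ)
    (hM : M * M.transpose = 1) :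
    ∃ e' : OrthonormalBasis (Fin 3) ℝ V₃,
      ∀ i, e' i = M i 0 • e 0 + M i 1 • e 1 + M i 2 • e 2 := by
  have ho : Orthonormal ℝ (fun i => M i 0 • e 0 + M i 1 • e 1 + M i 2 • e 2) := by
    rw [orthonormal_iff_ite]
    intro i j
    have h := congrFun (congrFun hM i) j
    simp only [Matrix.mul_apply, Fin.sum_univ_three, Matrix.transpose_apply,
      Matrix.one_apply] at h
    rw [← h]
    simp only [inner_add_left, inner_add_right, real_inner_smul_left, real_inner_smul_right,
      orthonormal_iff_ite.mp e.orthonormal]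
    simp
    ring
  obtain ⟨b, hb⟩ := Orthonormal.exists_orthonormalBasis_extension_of_card_eq (𝕜 := ℝ)
    (ι := Fin 3) (E := V₃) (by simp) (s := Set.univ)
    (v := fun i => M i 0 • e 0 + M i 1 • e 1 + M i 2 • e 2)
    (ho.comp _ Subtype.val_injective)
  exact ⟨b, fun i => hb i (Set.mem_univ i)⟩

lemma cub_change (K : V₃ →ₗ[ℝ] V₃ →ₗ[ℝ] V₃) (e e' : OrthonormalBasis (Fin 3) ℝ V₃)
    (M : Matrix (Fin 3) (Fin 3) ℝ)
    (h : ∀ i, e' i = M i 0 • e 0 + M i 1 • e 1 + M i 2 • e 2) (i j k : Fin 3) :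
    cub K e' i j k = ∑ a, ∑ b, ∑ c, M i a * M j b * M k c * cub K e a b c := by
  simp only [cub, h, map_add, map_smul, LinearMap.add_apply, LinearMap.smul_apply,
    inner_add_left, inner_add_right, real_inner_smul_left, real_inner_smul_right,
    Fin.sum_univ_three]
  ring

lemma quad_change (S : V₃ →ₗ[ℝ] V₃) (e e' : OrthonormalBasis (Fin 3) ℝ V₃)
    (M : Matrix (Fin 3) (Fin 3) ℝ)
    (h : ∀ i, e' i = M i 0 • e 0 + M i 1 • e 1 + M i 2 • e 2) (i j : Fin 3) :
    quad S e' i j = ∑ a, ∑ b, M i a * M j b * quad S e a b := by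
  simp only [quad, h, map_add, map_smul,
    inner_add_left, inner_add_right, real_inner_smul_left, real_inner_smul_right,
    Fin.sum_univ_three]
  ring

/-- Polar decomposition with an `n`-th root: every complex number is a nonnegative multiple of the
`n`-th power of a unit complex number. -/
lemma exists_unit_root (n : ℕ) (hn : 0 < n) (w : ℂ) :
    ∃ (r : ℝ) (z : ℂ), 0 ≤ r ∧ z.re ^ 2 + z.im ^ 2 = 1 ∧ w = r * z ^ n := by
  obtain ⟨z, hz⟩ := IsAlgClosed.exists_pow_nat_eq w hn
  by_cases h0 : z = 0
  · exact ⟨0, 1, le_rfl, by simp, by rw [← hz, h0]; simp [hn.ne']⟩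
  · have hz0 : ‖z‖ ≠ 0 := norm_ne_zero_iff.mpr h0
    refine ⟨‖z‖ ^ n, z / ‖z‖, by positivity, ?_, ?_⟩
    · rw [Complex.div_ofReal_re, Complex.div_ofReal_im, div_pow, div_pow, ← add_div,
        Complex.sq_norm, Complex.normSq_apply]
      have : z.re * z.re + z.im * z.im ≠ 0 := by
        rw [← Complex.normSq_apply]; simpa using h0
      rw [pow_two, pow_two]
      exact div_self this
    · rw [← hz, div_pow]
      have : (‖z‖ : ℂ) ≠ 0 := by exact_mod_cast hz0
      push_cast
      field_simp

lemma exists_unit_sq (p q : ℝ) : ∃ r x y : ℝ, 0 ≤ r ∧ x ^ 2 + y ^ 2 = 1 ∧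
    p = r * (x ^ 2 - y ^ 2) ∧ q = r * (2 * x * y) := by
  obtain ⟨r, z, hr, hz, h⟩ := exists_unit_root 2 (by norm_num) ⟨p, q⟩
  refine ⟨r, z.re, z.im, hr, hz, ?_, ?_⟩
  · have := congrArg Complex.re h
    simp [pow_succ] at this
    rw [this]; ring
  · have := congrArg Complex.im h
    simp [pow_succ] at this
    rw [this]; ring

lemma exists_unit_cube (p q : ℝ) : ∃ r x y : ℝ, 0 ≤ r ∧ x ^ 2 + y ^ 2 = 1 ∧
    p = r * (x ^ 3 - 3 * x * y ^ 2) ∧ q = r * (3 * x ^ 2 * y - y ^ 3) := by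
  obtain ⟨r, z, hr, hz, h⟩ := exists_unit_root 3 (by norm_num) ⟨p, q⟩
  refine ⟨r, z.re, z.im, hr, hz, ?_, ?_⟩
  · have := congrArg Complex.re h
    simp [pow_succ] at this
    rw [this]; ring
  · have := congrArg Complex.im h
    simp [pow_succ] at this
    rw [this]; ring

lemma exists_sign (x : ℝ) : ∃ s : ℝ, s ^ 2 = 1 ∧ 0 ≤ s * x := by
  rcases le_total 0 x with h | h
  · exact ⟨1, by norm_num, by simpa⟩
  · exact ⟨-1, by norm_num, by linarith⟩

/-! ### The axis of a rotation -/

/-- A rotation `g` has an axis: `det (A - 1) = det (A - A Aᵀ) = det (1 - A) = - det (A - 1)`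
in odd dimension. -/
lemma exists_axis (g : V₃ ≃ₗᵢ[ℝ] V₃)
    (hg : LinearMap.det (g.toLinearEquiv : V₃ →ₗ[ℝ] V₃) = 1) :
    ∃ v : V₃, v ≠ 0 ∧ g v = v := by
  set A := LinearMap.toMatrix stdB.toBasis stdB.toBasis (g.toLinearEquiv : V₃ →ₗ[ℝ] V₃) with hA
  have hdet : A.det = 1 := by rw [hA, LinearMap.det_toMatrix, hg]
  have hentry : ∀ i j, A i j = ⟪stdB i, g (stdB j)⟫ := by
    intro i j
    rw [hA, LinearMap.toMatrix_apply]
    simp [OrthonormalBasis.repr_apply_apply]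
  have hAtA : A.transpose * A = 1 := by
    ext i j
    rw [Matrix.mul_apply]
    simp only [Matrix.transpose_apply, hentry, Matrix.one_apply]
    have := stdB.sum_inner_mul_inner (g (stdB i)) (g (stdB j))
    rw [g.inner_map_map, orthonormal_iff_ite.mp stdB.orthonormal] at this
    rw [← this]
    simp [real_inner_comm]
  have hAAt : A * A.transpose = 1 := mul_eq_one_comm.mp hAtA
  have h1 : (A - 1).det = 0 := by
    have h2 : (A - 1).det = (1 - A).det := by
      calc (A - 1).det = (A * (1 - A.transpose)).det := by rw [mul_sub, hAAt, mul_one]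
        _ = (1 - A.transpose).det := by rw [Matrix.det_mul, hdet, one_mul]
        _ = (1 - A).det := by
            rw [← Matrix.det_transpose]; simp
    have h3 : (1 - A).det = -(A - 1).det := by
      rw [← neg_sub, Matrix.det_neg]; simp; ring
    linarith
  have h4 : LinearMap.det ((g.toLinearEquiv : V₃ →ₗ[ℝ] V₃) - 1) = 0 := by
    rw [← LinearMap.det_toMatrix stdB.toBasis, map_sub, LinearMap.toMatrix_one]
    exact h1
  obtain ⟨v, hv, hv0⟩ := (Submodule.ne_bot_iff _).mp (LinearMap.bot_lt_ker_of_det_eq_zero h4).ne'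
  refine ⟨v, hv0, ?_⟩
  have : g v - v = 0 := by simpa using hv
  exact sub_eq_zero.mp this

/-- A nontrivial rotation is, in a suitable orthonormal basis, the rotation about the first basis
vector with cosine `c ≠ 1` and sine `s`. -/
lemma exists_rotation_basis (g : V₃ ≃ₗᵢ[ℝ] V₃)
    (hg : LinearMap.det (g.toLinearEquiv : V₃ →ₗ[ℝ] V₃) = 1) (hne : g ≠ 1) :
    ∃ (e : OrthonormalBasis (Fin 3) ℝ V₃) (c s : ℝ), c ^ 2 + s ^ 2 = 1 ∧ c ≠ 1 ∧
      g (e 0) = e 0 ∧ g (e 1) = c • e 1 + s • e 2 ∧ g (e 2) = (-s) • e 1 + c • e 2 := by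
  obtain ⟨v, hv0, hv⟩ := exists_axis g hg
  obtain ⟨e, he⟩ := Orthonormal.exists_orthonormalBasis_extension_of_card_eq (𝕜 := ℝ)
    (ι := Fin 3) (E := V₃) (by simp) (s := {0}) (v := fun _ => (‖v‖⁻¹ : ℝ) • v)
    (by
      rw [orthonormal_iff_ite]
      rintro ⟨i, hi⟩ ⟨j, hj⟩
      obtain rfl : i = 0 := hi
      obtain rfl : j = 0 := hj
      have : ‖v‖ ≠ 0 := norm_ne_zero_iff.mpr hv0
      simp only [Set.domRestrict_apply, real_inner_self_eq_norm_sq, norm_smul, norm_inv,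
        norm_norm, if_true]
      rw [inv_mul_cancel₀ this, one_pow])
  have h0 : g (e 0) = e 0 := by rw [he 0 rfl]; simp [hv]
  have hon := orthonormal_iff_ite.mp e.orthonormal
  have hz : ∀ i, i ≠ 0 → ⟪g (e i), e 0⟫ = 0 := by
    intro i hi
    conv_lhs => rw [← h0]
    rw [g.inner_map_map, hon, if_neg hi]
  have h1 := vec_expand e (g (e 1))
  have h2 := vec_expand e (g (e 2))
  rw [hz 1 (by decide), zero_smul, zero_add] at h1
  rw [hz 2 (by decide), zero_smul, zero_add] at h2
  have hdet : ⟪g (e 1), e 1⟫ * ⟪g (e 2), e 2⟫ - ⟪g (e 2), e 1⟫ * ⟪g (e 1), e 2⟫ = 1 := by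
    rw [← LinearMap.det_toMatrix e.toBasis, Matrix.det_fin_three] at hg
    simp only [LinearMap.toMatrix_apply, OrthonormalBasis.coe_toBasis,
      OrthonormalBasis.coe_toBasis_repr_apply, OrthonormalBasis.repr_apply_apply,
      LinearEquiv.coe_coe, LinearIsometryEquiv.coe_toLinearEquiv, h0, hon] at hg
    rw [real_inner_comm (e 1) (g (e 1)), real_inner_comm (e 2) (g (e 2)),
      real_inner_comm (e 1) (g (e 2)), real_inner_comm (e 2) (g (e 1))]
    simpa using hg
  set c := ⟪g (e 1), e 1⟫
  set s := ⟪g (e 1), e 2⟫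
  set p := ⟪g (e 2), e 1⟫
  set q := ⟪g (e 2), e 2⟫
  have n1 : c ^ 2 + s ^ 2 = 1 := by
    have := g.inner_map_map (e 1) (e 1)
    rw [h1] at this
    simp only [inner_add_left, inner_add_right, real_inner_smul_left, real_inner_smul_right,
      hon] at this
    simp only [Fin.reduceEq, if_true, if_false] at this
    linarith
  have n2 : p ^ 2 + q ^ 2 = 1 := by
    have := g.inner_map_map (e 2) (e 2)
    rw [h2] at this
    simp only [inner_add_left, inner_add_right, real_inner_smul_left, real_inner_smul_right,
      hon] at this
    simp only [Fin.reduceEq, if_true, if_false] at this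
    linarith
  have hsum : (c - q) ^ 2 + (s + p) ^ 2 = 0 := by nlinarith
  have hq : q = c := by nlinarith [sq_nonneg (c - q), sq_nonneg (s + p)]
  have hp : p = -s := by nlinarith [sq_nonneg (c - q), sq_nonneg (s + p)]
  rw [hq, hp] at h2
  refine ⟨e, c, s, n1, ?_, h0, h1, h2⟩
  intro hc
  have hs : s = 0 := by nlinarith
  apply hne
  rw [hc, hs] at h1 h2
  ext1 x
  have hx := vec_expand e x
  rw [hx]
  simp [h0, h1, h2]

/-! ### Consequences of invariance under a rotation -/

/-- Splitting the components of `(K,S)` by their weight under rotations about `e 0`, invariance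
under a nontrivial rotation kills weight `1`, and then either weight `2` (if the sine is nonzero)
or weight `3` (if the rotation is a half-turn). -/
lemma comps_of_invariant {K : V₃ →ₗ[ℝ] V₃ →ₗ[ℝ] V₃} {S : V₃ →ₗ[ℝ] V₃}
    (hK : IsAdmissibleK K) (hS : IsSymmEndo S) {g : V₃ ≃ₗᵢ[ℝ] V₃} (hg : g ∈ stab K S)
    (e : OrthonormalBasis (Fin 3) ℝ V₃) (c s : ℝ) (hcs : c ^ 2 + s ^ 2 = 1) (hc : c ≠ 1)
    (h0 : g (e 0) = e 0) (h1 : g (e 1) = c • e 1 + s • e 2)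
    (h2 : g (e 2) = (-s) • e 1 + c • e 2) :
    cub K e 0 0 1 = 0 ∧ cub K e 0 0 2 = 0 ∧ quad S e 0 1 = 0 ∧ quad S e 0 2 = 0 ∧
    ((cub K e 0 1 1 = cub K e 0 2 2 ∧ cub K e 0 1 2 = 0 ∧
        quad S e 1 1 = quad S e 2 2 ∧ quad S e 1 2 = 0) ∨
      (cub K e 1 1 1 = 0 ∧ cub K e 1 1 2 = 0 ∧ cub K e 1 2 2 = 0 ∧ cub K e 2 2 2 = 0)) := by
  obtain ⟨-, hgK, hgS⟩ := hg
  have hcub : ∀ i j k, cub K (e.map g) i j k = cub K e i j k := by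
    intro i j k
    simp [cub, hgK]
  have hquad : ∀ i j, quad S (e.map g) i j = quad S e i j := by
    intro i j
    simp [quad, hgS]
  have hM : ∀ i, (e.map g) i = !![1, 0, 0; 0, c, s; 0, -s, c] i 0 • e 0 +
      !![1, 0, 0; 0, c, s; 0, -s, c] i 1 • e 1 + !![1, 0, 0; 0, c, s; 0, -s, c] i 2 • e 2 := by
    intro i
    fin_cases i <;> simp [h0, h1, h2]
  obtain ⟨s1, s2, s3, s4, s5, s6, s7, s8, s9, s10, s11, s12, s13, s14, s15, s16, s17⟩ :=
    cub_symm hK e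
  have q1 := quad_symm hS e 2 1
  have k001 := hcub 0 0 1
  have k002 := hcub 0 0 2
  have k011 := hcub 0 1 1
  have k012 := hcub 0 1 2
  have k111 := hcub 1 1 1
  have k112 := hcub 1 1 2
  have k122 := hcub 1 2 2
  have k222 := hcub 2 2 2
  have l01 := hquad 0 1
  have l02 := hquad 0 2
  have l11 := hquad 1 1
  have l12 := hquad 1 2
  rw [cub_change K e _ _ hM] at k001 k002 k011 k012 k111 k112 k122 k222
  rw [quad_change S e _ _ hM] at l01 l02 l11 l12
  simp [Fin.sum_univ_three, s9, s14, s15, s16, s17] at k001 k002 k011 k012 k111 k112 k122 k222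
  simp [Fin.sum_univ_three, q1] at l01 l02 l11 l12
  -- A weight-one pair is a fixed vector of a plane rotation different from the identity.
  have key1 : ∀ p q : ℝ, c * p + s * q = p → -(s * p) + c * q = q → p = 0 ∧ q = 0 := by
    intro p q hp hq
    have hc_ne : 1 - c ≠ 0 := fun h => hc (by linarith)
    have e1 : (1 - c) * p = 0 := by
      linear_combination (1 / 2 : ℝ) * ((c - 1) * hp - s * hq) - (p / 2) * hcs
    have e2 : (1 - c) * q = 0 := by
      linear_combination (1 / 2 : ℝ) * ((c - 1) * hq + s * hp) - (q / 2) * hcs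
    exact ⟨(mul_eq_zero.mp e1).resolve_left hc_ne, (mul_eq_zero.mp e2).resolve_left hc_ne⟩
  -- A weight-two pair vanishes when the angle is not a multiple of `π`.
  have key2 : ∀ p q r : ℝ, s ≠ 0 → c * c * p + c * s * q + (s * c * q + s * s * r) = p →
      -(c * s * p) + c * c * q + (-(s * s * q) + s * c * r) = q → p = r ∧ q = 0 := by
    intro p q r hs hp hq
    have e1 : s * (s * (r - p) + 2 * c * q) = 0 := by
      linear_combination hp - p * hcs
    have e2 : s * (c * (r - p) - 2 * s * q) = 0 := by
      linear_combination hq - q * hcs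
    have e1' := (mul_eq_zero.mp e1).resolve_left hs
    have e2' := (mul_eq_zero.mp e2).resolve_left hs
    constructor
    · linear_combination (r - p) * hcs - s * e1' - c * e2'
    · linear_combination (1/2 : ℝ) * (c * e1' - s * e2') - q * hcs
  obtain ⟨a1, a2⟩ := key1 _ _ k001 k002
  obtain ⟨b1, b2⟩ := key1 _ _ l01 l02
  refine ⟨a1, a2, b1, b2, ?_⟩
  by_cases hs : s = 0
  · right
    have hc_ne : c = -1 := by
      have : (c - 1) * (c + 1) = 0 := by rw [hs] at hcs; linarith
      rcases mul_eq_zero.mp this with h | h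
      · exact absurd (by linarith) hc
      · linarith
    subst hs hc_ne
    refine ⟨?_, ?_, ?_, ?_⟩ <;> linarith
  · left
    obtain ⟨a1, a2⟩ := key2 _ _ _ hs k011 k012
    obtain ⟨b1, b2⟩ := key2 _ _ _ hs l11 l12
    exact ⟨a1, a2, b1, b2⟩

/-! ### Bringing the pair into `Z₂`- or `Z₃`-form -/

/-- Invariance under the half-turn about `e 0`: rotating `e 1, e 2` equalizes the diagonal
entries of the weight-two part of `K`. -/
lemma exists_Z2Form {K : V₃ →ₗ[ℝ] V₃ →ₗ[ℝ] V₃} {S : V₃ →ₗ[ℝ] V₃}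
    (hK : IsAdmissibleK K) (hS : IsSymmEndo S) (e : OrthonormalBasis (Fin 3) ℝ V₃)
    (h001 : cub K e 0 0 1 = 0) (h002 : cub K e 0 0 2 = 0)
    (q01 : quad S e 0 1 = 0) (q02 : quad S e 0 2 = 0)
    (h111 : cub K e 1 1 1 = 0) (h112 : cub K e 1 1 2 = 0)
    (h122 : cub K e 1 2 2 = 0) (h222 : cub K e 2 2 2 = 0) :
    ∃ (e' : OrthonormalBasis (Fin 3) ℝ V₃) (lam mu a b c d : ℝ), 0 ≤ lam ∧ 0 ≤ mu ∧
      Z2Form K S e' lam mu a b c d := by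
  obtain ⟨ε, hε, hεpos⟩ := exists_sign (cub K e 0 0 0)
  obtain ⟨r, x, y, hr, hxy, hp, hq⟩ := exists_unit_sq (ε * cub K e 0 1 2)
    (-(ε * ((cub K e 0 1 1 - cub K e 0 2 2) / 2)))
  obtain ⟨e', he'⟩ := exists_basis e !![ε, 0, 0; 0, x, y; 0, -y, x] (by
    ext i j
    fin_cases i <;> fin_cases j <;> simp [Matrix.mul_apply, Fin.sum_univ_three] <;> grind)
  have htr := cub_trace hK e 0
  obtain ⟨s1, s2, s3, s4, s5, s6, s7, s8, s9, s10, s11, s12, s13, s14, s15, s16, s17⟩ :=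
    cub_symm hK e
  have T := fun i j k => cub_change K e e' _ he' i j k
  have Q := fun i j => quad_change S e e' _ he' i j
  have q10 : quad S e 1 0 = 0 := by rw [quad_symm hS, q01]
  have q20 : quad S e 2 0 = 0 := by rw [quad_symm hS, q02]
  have hc11 : ε * cub K e 0 1 1 = -(ε * cub K e 0 0 0) / 2 - r * (2 * x * y) := by
    linear_combination (ε / 2) * htr - hq
  have hc22 : ε * cub K e 0 2 2 = -(ε * cub K e 0 0 0) / 2 + r * (2 * x * y) := by
    linear_combination (ε / 2) * htr + hq
  have t000 : cub K e' 0 0 0 = 2 * (ε * cub K e 0 0 0 / 2) := by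
    rw [T]; simp [Fin.sum_univ_three, *]; grind
  have t001 : cub K e' 0 0 1 = 0 := by
    rw [T]; simp [Fin.sum_univ_three, *]
  have t002 : cub K e' 0 0 2 = 0 := by
    rw [T]; simp [Fin.sum_univ_three, *]
  have t011 : cub K e' 0 1 1 = -(ε * cub K e 0 0 0 / 2) := by
    rw [T]; simp [Fin.sum_univ_three, s9]; grind
  have t012 : cub K e' 0 1 2 = r := by
    rw [T]; simp [Fin.sum_univ_three, s9]; grind
  have t022 : cub K e' 0 2 2 = -(ε * cub K e 0 0 0 / 2) := by
    rw [T]; simp [Fin.sum_univ_three, s9]; grind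
  have t111 : cub K e' 1 1 1 = 0 := by
    rw [T]; simp [Fin.sum_univ_three, h111, h112, h122, h222, s14, s15, s16, s17]
  have t112 : cub K e' 1 1 2 = 0 := by
    rw [T]; simp [Fin.sum_univ_three, h111, h112, h122, h222, s14, s15, s16, s17]
  have t122 : cub K e' 1 2 2 = 0 := by
    rw [T]; simp [Fin.sum_univ_three, h111, h112, h122, h222, s14, s15, s16, s17]
  have t222 : cub K e' 2 2 2 = 0 := by
    rw [T]; simp [Fin.sum_univ_three, h111, h112, h122, h222, s14, s15, s16, s17]
  have u01 : quad S e' 0 1 = 0 := by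
    rw [Q]; simp [Fin.sum_univ_three, q01, q02]
  have u02 : quad S e' 0 2 = 0 := by
    rw [Q]; simp [Fin.sum_univ_three, q01, q02]
  have u10 : quad S e' 1 0 = 0 := by rw [quad_symm hS, u01]
  have u20 : quad S e' 2 0 = 0 := by rw [quad_symm hS, u02]
  have u21 := quad_symm hS e' 2 1
  obtain ⟨s1, s2, s3, s4, s5, s6, s7, s8, s9, s10, s11, s12, s13, s14, s15, s16, s17⟩ :=
    cub_symm hK e'
  refine ⟨e', ε * cub K e 0 0 0 / 2, r, quad S e' 0 0, quad S e' 1 1, quad S e' 2 2,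
    quad S e' 1 2, by linarith, hr, ?_⟩
  clear T Q
  refine ⟨?_, ?_, ?_, ?_, ?_, ?_, ?_, ?_, ?_⟩
  · rw [K_expand, t000, t001, t002]; simp
  · rw [K_expand, s1, t001, t011, t012]; simp
  · rw [K_expand, s3, t002, s9, t012, t022]; simp
  · rw [K_expand, s6, t011, t111, t112]; simp
  · rw [K_expand, s11, t012, s14, t112, t122]; simp
  · rw [K_expand, s8, t022, s17, t122, t222]; simp
  · rw [S_expand, u01, u02]; simp
  · rw [S_expand, u10]; simp
  · rw [S_expand, u20, u21]; simp

/-- When the weight-two part vanishes, rotating `e 1, e 2` aligns the planar harmonic cubic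
(the weight-three part of `K`) with `e 1`. -/
lemma exists_Z3Form {K : V₃ →ₗ[ℝ] V₃ →ₗ[ℝ] V₃} {S : V₃ →ₗ[ℝ] V₃}
    (hK : IsAdmissibleK K) (hS : IsSymmEndo S) (e : OrthonormalBasis (Fin 3) ℝ V₃)
    (h001 : cub K e 0 0 1 = 0) (h002 : cub K e 0 0 2 = 0)
    (q01 : quad S e 0 1 = 0) (q02 : quad S e 0 2 = 0)
    (h011 : cub K e 0 1 1 = cub K e 0 2 2) (h012 : cub K e 0 1 2 = 0)
    (q11 : quad S e 1 1 = quad S e 2 2) (q12 : quad S e 1 2 = 0) :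
    ∃ (e' : OrthonormalBasis (Fin 3) ℝ V₃) (lam mu a b : ℝ), 0 ≤ lam ∧ 0 ≤ mu ∧
      Z3Form K S e' lam mu a b := by
  obtain ⟨ε, hε, hεpos⟩ := exists_sign (cub K e 0 0 0)
  obtain ⟨r, x, y, hr, hxy, hp, hq⟩ := exists_unit_cube (cub K e 1 1 1) (cub K e 1 1 2)
  obtain ⟨e', he'⟩ := exists_basis e !![ε, 0, 0; 0, x, y; 0, -y, x] (by
    ext i j
    fin_cases i <;> fin_cases j <;> simp [Matrix.mul_apply, Fin.sum_univ_three] <;> grind)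
  have htr := cub_trace hK e 0
  have htr1 := cub_trace hK e 1
  have htr2 := cub_trace hK e 2
  obtain ⟨s1, s2, s3, s4, s5, s6, s7, s8, s9, s10, s11, s12, s13, s14, s15, s16, s17⟩ :=
    cub_symm hK e
  have h122 : cub K e 1 2 2 = -(r * (x ^ 3 - 3 * x * y ^ 2)) := by
    rw [← hp]; linarith
  have h222 : cub K e 2 2 2 = -(r * (3 * x ^ 2 * y - y ^ 3)) := by
    rw [← hq]; linarith
  have h022 : cub K e 0 2 2 = -(cub K e 0 0 0) / 2 := by linarith
  rw [h022] at h011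
  have T := fun i j k => cub_change K e e' _ he' i j k
  have Q := fun i j => quad_change S e e' _ he' i j
  have q10 : quad S e 1 0 = 0 := by rw [quad_symm hS, q01]
  have q20 : quad S e 2 0 = 0 := by rw [quad_symm hS, q02]
  have q21 : quad S e 2 1 = 0 := by rw [quad_symm hS, q12]
  have t000 : cub K e' 0 0 0 = 2 * (ε * cub K e 0 0 0 / 2) := by
    rw [T]; simp [Fin.sum_univ_three]; grind
  have t001 : cub K e' 0 0 1 = 0 := by
    rw [T]; simp [Fin.sum_univ_three, h001, h002]
  have t002 : cub K e' 0 0 2 = 0 := by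
    rw [T]; simp [Fin.sum_univ_three, h001, h002]
  have t011 : cub K e' 0 1 1 = -(ε * cub K e 0 0 0 / 2) := by
    rw [T]; simp [Fin.sum_univ_three, s9, h012, h011, h022]; grind
  have t012 : cub K e' 0 1 2 = 0 := by
    rw [T]; simp [Fin.sum_univ_three, s9, h012, h011, h022]; grind
  have t022 : cub K e' 0 2 2 = -(ε * cub K e 0 0 0 / 2) := by
    rw [T]; simp [Fin.sum_univ_three, s9, h012, h011, h022]; grind
  have t111 : cub K e' 1 1 1 = r := by
    rw [T]; simp [Fin.sum_univ_three, s14, s15, s16, s17, hp, hq, h122, h222]; grind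
  have t112 : cub K e' 1 1 2 = 0 := by
    rw [T]; simp [Fin.sum_univ_three, s14, s15, s16, s17, hp, hq, h122, h222]; grind
  have t122 : cub K e' 1 2 2 = -r := by
    rw [T]; simp [Fin.sum_univ_three, s14, s15, s16, s17, hp, hq, h122, h222]; grind
  have t222 : cub K e' 2 2 2 = 0 := by
    rw [T]; simp [Fin.sum_univ_three, s14, s15, s16, s17, hp, hq, h122, h222]; grind
  have u01 : quad S e' 0 1 = 0 := by
    rw [Q]; simp [Fin.sum_univ_three, q01, q02]
  have u02 : quad S e' 0 2 = 0 := by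
    rw [Q]; simp [Fin.sum_univ_three, q01, q02]
  have u11 : quad S e' 1 1 = quad S e 1 1 := by
    rw [Q]; simp [Fin.sum_univ_three, q12, q21, q11]; grind
  have u12 : quad S e' 1 2 = 0 := by
    rw [Q]; simp [Fin.sum_univ_three, q12, q21, q11]; grind
  have u22 : quad S e' 2 2 = quad S e 1 1 := by
    rw [Q]; simp [Fin.sum_univ_three, q12, q21, q11]; grind
  have u10 : quad S e' 1 0 = 0 := by rw [quad_symm hS, u01]
  have u20 : quad S e' 2 0 = 0 := by rw [quad_symm hS, u02]
  have u21 : quad S e' 2 1 = 0 := by rw [quad_symm hS, u12]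
  obtain ⟨s1, s2, s3, s4, s5, s6, s7, s8, s9, s10, s11, s12, s13, s14, s15, s16, s17⟩ :=
    cub_symm hK e'
  refine ⟨e', ε * cub K e 0 0 0 / 2, r, quad S e' 0 0, quad S e 1 1, by linarith, hr, ?_⟩
  clear T Q
  refine ⟨?_, ?_, ?_, ?_, ?_, ?_, ?_, ?_, ?_⟩
  · rw [K_expand, t000, t001, t002]; simp
  · rw [K_expand, s1, t001, t011, t012]; simp
  · rw [K_expand, s3, t002, s9, t012, t022]; simp
  · rw [K_expand, s6, t011, t111, t112]; simp
  · rw [K_expand, s11, t012, s14, t112, t122]; simp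
  · rw [K_expand, s8, t022, s17, t122, t222]; simp
  · rw [S_expand, u01, u02]; simp
  · rw [S_expand, u10, u11, u12]; simp
  · rw [S_expand, u20, u21, u22]; simp

/-! ### Degenerate parameter values -/

/-- The eight canonical forms of the classification, in the given orthonormal basis. -/
def Canonical (K : V₃ →ₗ[ℝ] V₃ →ₗ[ℝ] V₃) (S : V₃ →ₗ[ℝ] V₃)
    (e : OrthonormalBasis (Fin 3) ℝ V₃) : Prop :=
  (K = 0 ∧ ∃ a : ℝ, S = a • (LinearMap.id : V₃ →ₗ[ℝ] V₃)) ∨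
  (K = 0 ∧ ∃ a b : ℝ, a ≠ b ∧
    S (e 0) = a • e 0 ∧ S (e 1) = b • e 1 ∧ S (e 2) = b • e 2) ∨
  (∃ lam a b : ℝ, 0 < lam ∧ SO2Form K S e lam a b) ∨
  (∃ lam a : ℝ, 0 < lam ∧ OTForm K S e lam a a a) ∨
  (∃ lam a b : ℝ, 0 < lam ∧ S3Form K S e lam a b) ∨
  (∃ lam a b c : ℝ, OTForm K S e lam a b c ∧
    (0 < lam → ¬(a = b ∧ b = c)) ∧
    (lam = 0 → a ≠ b ∧ a ≠ c ∧ b ≠ c)) ∨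
  (∃ lam mu a b : ℝ, Z3Form K S e lam mu a b ∧
    ((0 < lam ∧ 0 < mu ∧ mu ≠ Real.sqrt 2 * lam) ∨
     (mu = Real.sqrt 2 * lam ∧ 0 < mu ∧ a ≠ b))) ∨
  (∃ lam mu a b c d : ℝ, Z2Form K S e lam mu a b c d ∧
    ((0 < lam ∧ 0 < mu ∧ lam ≠ mu) ∨
     (lam = mu ∧ 0 < lam ∧ (b - c)^2 + (b + c - 2*a - 2*d)^2 ≠ 0) ∨
     (lam = 0 ∧ 0 < mu ∧ d ≠ 0) ∨
     (mu = 0 ∧ 0 < lam ∧ (b - c)^2 + d^2 ≠ 0)))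

/-- For `K = 0` the spectral theorem diagonalizes `S`, and the eigenvalues are sorted by
coincidences. -/
lemma canonical_of_K_zero {K : V₃ →ₗ[ℝ] V₃ →ₗ[ℝ] V₃} {S : V₃ →ₗ[ℝ] V₃}
    (hK : K = 0) (hS : IsSymmEndo S) : ∃ e, Canonical K S e := by
  have hsym : S.IsSymmetric := hS
  have hn : Module.finrank ℝ V₃ = 3 := by simp
  set e := hsym.eigenvectorBasis hn
  have he : ∀ i, S (e i) = hsym.eigenvalues hn i • e i :=
    fun i => hsym.apply_eigenvectorBasis hn i
  generalize hsym.eigenvalues hn = ev at he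
  clear_value e
  by_cases h01 : ev 0 = ev 1
  · by_cases h12 : ev 1 = ev 2
    · refine ⟨e, Or.inl ⟨hK, ev 0, ?_⟩⟩
      apply e.toBasis.ext
      intro i
      fin_cases i <;> simp [he, h01, h12]
    · exact ⟨e.reindex (Equiv.swap 0 2), Or.inr (Or.inl ⟨hK, ev 2, ev 1, Ne.symm h12,
        by simp [he], by simp [he, Equiv.swap_apply_of_ne_of_ne], by simp [he, h01]⟩)⟩
  · by_cases h12 : ev 1 = ev 2
    · exact ⟨e, Or.inr (Or.inl ⟨hK, ev 0, ev 2, by rwa [← h12], he 0, by rw [he, h12], he 2⟩)⟩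
    · by_cases h02 : ev 0 = ev 2
      · exact ⟨e.reindex (Equiv.swap 0 1), Or.inr (Or.inl ⟨hK, ev 1, ev 2, h12,
          by simp [he], by simp [he, h02], by simp [he, Equiv.swap_apply_of_ne_of_ne]⟩)⟩
      · exact ⟨e, Or.inr (Or.inr (Or.inr (Or.inr (Or.inr (Or.inl ⟨0, ev 0, ev 1, ev 2,
          by simp [OTForm, hK, he], fun h => absurd h (lt_irrefl _), fun _ => ⟨h01, h02, h12⟩⟩)))))⟩

lemma K_eq_zero {K : V₃ →ₗ[ℝ] V₃ →ₗ[ℝ] V₃} (e : OrthonormalBasis (Fin 3) ℝ V₃)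
    (h : ∀ i j, K (e i) (e j) = 0) : K = 0 := by
  apply e.toBasis.ext
  intro i
  apply e.toBasis.ext
  intro j
  simpa using h i j

/-- At `λ = μ` with `b = c = a + d`, the stabilizer contains a copy of `S₃`: the cubic form is
`2λ(x³ - 3xv²)` with `v = (y - z)/√2`. -/
lemma canonical_of_Z2Form_dihedral {K : V₃ →ₗ[ℝ] V₃ →ₗ[ℝ] V₃} {S : V₃ →ₗ[ℝ] V₃}
    (hK : IsAdmissibleK K) (e : OrthonormalBasis (Fin 3) ℝ V₃)
    {lam a d : ℝ} (hl : 0 < lam) (h : Z2Form K S e lam lam a (a + d) (a + d) d) :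
    ∃ e', Canonical K S e' := by
  obtain ⟨k00, k01, k02, k11, k12, k22, S0, S1, S2⟩ := h
  have k21 := hK.1 (e 2) (e 1)
  obtain ⟨w, hw⟩ : ∃ w : ℝ, w ^ 2 = 1 / 2 :=
    ⟨Real.sqrt (1 / 2), Real.sq_sqrt (by norm_num)⟩
  obtain ⟨e', he'⟩ := exists_basis e !![1, 0, 0; 0, w, -w; 0, w, w] (by
    ext i j
    fin_cases i <;> fin_cases j <;> simp [Matrix.mul_apply, Fin.sum_univ_three] <;> grind)
  have e0 : e' 0 = e 0 := by rw [he']; simp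
  have e1 : e' 1 = w • e 1 + (-w) • e 2 := by rw [he']; simp
  have e2 : e' 2 = w • e 1 + w • e 2 := by rw [he']; simp
  refine ⟨e', Or.inr (Or.inr (Or.inr (Or.inr (Or.inl
    ⟨2 * lam, a, a + 2 * d, by linarith, ?_⟩))))⟩
  refine ⟨by rw [e0, k00], ?_, ?_, ?_, ?_, ?_, by rw [e0, S0], ?_, ?_⟩
  · simp only [e0, e1, map_add, map_smul, k01, k02]
    module
  · simp only [e0, e1, map_add, map_smul, LinearMap.add_apply, LinearMap.smul_apply,
      k11, k12, k22, k21]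
    match_scalars
    linear_combination (-4 * lam) * hw
  · simp only [e0, e2, map_add, map_smul, k01, k02]
    module
  · simp only [e1, e2, map_add, map_smul, LinearMap.add_apply, LinearMap.smul_apply,
      k11, k12, k22, k21]
    module
  · simp only [e2, map_add, map_smul, LinearMap.add_apply, LinearMap.smul_apply,
      k11, k12, k22, k21]
    module
  · simp only [e1, map_add, map_smul, S1, S2]
    module
  · simp only [e2, map_add, map_smul, S1, S2]
    module

/-- A pair in `Z₂`-form with `λ, μ ≥ 0` is canonical: the excluded parameter values acquire a
larger stabilizer and fall into the forms with more symmetry. -/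
lemma canonical_of_Z2Form {K : V₃ →ₗ[ℝ] V₃ →ₗ[ℝ] V₃} {S : V₃ →ₗ[ℝ] V₃}
    (hK : IsAdmissibleK K) (hS : IsSymmEndo S) (e : OrthonormalBasis (Fin 3) ℝ V₃)
    {lam mu a b c d : ℝ} (hl : 0 ≤ lam) (hm : 0 ≤ mu) (h : Z2Form K S e lam mu a b c d) :
    ∃ e', Canonical K S e' := by
  have hZ := h
  obtain ⟨k00, k01, k02, k11, k12, k22, S0, S1, S2⟩ := h
  have k10 := hK.1 (e 1) (e 0)
  have k20 := hK.1 (e 2) (e 0)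
  have k21 := hK.1 (e 2) (e 1)
  have viii : ∀ P : ((0 < lam ∧ 0 < mu ∧ lam ≠ mu) ∨
     (lam = mu ∧ 0 < lam ∧ (b - c)^2 + (b + c - 2*a - 2*d)^2 ≠ 0) ∨
     (lam = 0 ∧ 0 < mu ∧ d ≠ 0) ∨
     (mu = 0 ∧ 0 < lam ∧ (b - c)^2 + d^2 ≠ 0)), Canonical K S e := fun P =>
    Or.inr (Or.inr (Or.inr (Or.inr (Or.inr (Or.inr (Or.inr ⟨lam, mu, a, b, c, d, hZ, P⟩))))))
  rcases hl.eq_or_lt with rfl | hl <;> rcases hm.eq_or_lt with rfl | hm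
  · apply canonical_of_K_zero _ hS
    apply K_eq_zero e
    intro i j
    fin_cases i <;> fin_cases j <;> simp [*]
  · by_cases hd : d = 0
    · subst hd
      have hOT : OTForm K S e mu a b c := by simp [OTForm, *]
      by_cases habc : a = b ∧ b = c
      · obtain ⟨rfl, rfl⟩ := habc
        exact ⟨e, Or.inr (Or.inr (Or.inr (Or.inl ⟨mu, a, hm, hOT⟩)))⟩
      · exact ⟨e, Or.inr (Or.inr (Or.inr (Or.inr (Or.inr (Or.inl
          ⟨mu, a, b, c, hOT, fun _ => habc, fun h => absurd h hm.ne'⟩)))))⟩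
    · exact ⟨e, viii (Or.inr (Or.inr (Or.inl ⟨rfl, hm, hd⟩)))⟩
  · by_cases hd : (b - c)^2 + d^2 = 0
    · have hd0 : d = 0 := by nlinarith [sq_nonneg (b - c), sq_nonneg d]
      have hbc : c = b := by nlinarith [sq_nonneg (b - c), sq_nonneg d]
      subst hd0 hbc
      exact ⟨e, Or.inr (Or.inr (Or.inl ⟨lam, a, c, hl, by simp [SO2Form, *]⟩))⟩
    · exact ⟨e, viii (Or.inr (Or.inr (Or.inr ⟨rfl, hl, hd⟩)))⟩
  · by_cases hlm : lam = mu
    · by_cases hd : (b - c)^2 + (b + c - 2*a - 2*d)^2 = 0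
      · have hbc : c = b := by nlinarith [sq_nonneg (b - c), sq_nonneg (b + c - 2*a - 2*d)]
        have hda : b = a + d := by nlinarith [sq_nonneg (b - c), sq_nonneg (b + c - 2*a - 2*d)]
        subst hlm hbc hda
        exact canonical_of_Z2Form_dihedral hK e hl hZ
      · exact ⟨e, viii (Or.inr (Or.inl ⟨hlm, hl, hd⟩))⟩
    · exact ⟨e, viii (Or.inl ⟨hl, hm, hlm⟩)⟩

/-- At `μ = √2 λ` with `S` scalar, the stabilizer is the tetrahedral group: the cubic form is
`λ(x + √2y)(√2x - y - √3z)(√2x - y + √3z)`, whose linear factors are mutually orthogonal;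
the scalars `w = 1/√2` and `p = 1/√3` normalize them. -/
lemma canonical_of_Z3Form_tetrahedral {K : V₃ →ₗ[ℝ] V₃ →ₗ[ℝ] V₃} {S : V₃ →ₗ[ℝ] V₃}
    (hK : IsAdmissibleK K) (e : OrthonormalBasis (Fin 3) ℝ V₃)
    {lam a : ℝ} (hl : 0 < lam) (h : Z3Form K S e lam (Real.sqrt 2 * lam) a a) :
    ∃ e', Canonical K S e' := by
  obtain ⟨w, hw, hw2⟩ : ∃ w : ℝ, w ^ 2 = 1 / 2 ∧ Real.sqrt 2 = 2 * w :=
    ⟨Real.sqrt 2 / 2, by rw [div_pow, Real.sq_sqrt (by norm_num)]; norm_num, by ring⟩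
  obtain ⟨p, hp, hp0⟩ : ∃ p : ℝ, p ^ 2 = 1 / 3 ∧ 0 < p :=
    ⟨Real.sqrt (1 / 3), Real.sq_sqrt (by norm_num), by positivity⟩
  have hw3 : w ^ 3 = w / 2 := by rw [pow_succ, hw]; ring
  rw [hw2] at h
  obtain ⟨k00, k01, k02, k11, k12, k22, S0, S1, S2⟩ := h
  have k10 := hK.1 (e 1) (e 0)
  have k20 := hK.1 (e 2) (e 0)
  have k21 := hK.1 (e 2) (e 1)
  obtain ⟨e', he'⟩ := exists_basis e
    !![p, 2 * w * p, 0; p, -(w * p), -w; p, -(w * p), w] (by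
    ext i j
    fin_cases i <;> fin_cases j <;> simp [Matrix.mul_apply, Fin.sum_univ_three] <;> grind)
  have e0 : e' 0 = p • e 0 + (2 * w * p) • e 1 := by rw [he']; simp
  have e1 : e' 1 = p • e 0 + (-(w * p)) • e 1 + (-w) • e 2 := by rw [he']; simp
  have e2 : e' 2 = p • e 0 + (-(w * p)) • e 1 + w • e 2 := by rw [he']; simp
  refine ⟨e', Or.inr (Or.inr (Or.inr (Or.inl ⟨3 * p * lam, a, by positivity, ?_⟩)))⟩
  refine ⟨?_, ?_, ?_, ?_, ?_, ?_, ?_, ?_, ?_⟩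
  iterate 6
    · simp only [e0, e1, e2, map_add, map_smul, LinearMap.add_apply, LinearMap.smul_apply,
        k00, k01, k02, k11, k12, k22, k10, k20, k21]
      match_scalars <;> ring_nf <;> simp only [hw, hw3, hp] <;> ring
  iterate 3
    · simp only [e0, e1, e2, map_add, map_smul, S0, S1, S2]
      module

/-- A pair in `Z₃`-form with `λ, μ ≥ 0` is canonical: the excluded parameter values acquire a
larger stabilizer and fall into the forms with more symmetry. -/
lemma canonical_of_Z3Form {K : V₃ →ₗ[ℝ] V₃ →ₗ[ℝ] V₃} {S : V₃ →ₗ[ℝ] V₃}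
    (hK : IsAdmissibleK K) (hS : IsSymmEndo S) (e : OrthonormalBasis (Fin 3) ℝ V₃)
    {lam mu a b : ℝ} (hl : 0 ≤ lam) (hm : 0 ≤ mu) (h : Z3Form K S e lam mu a b) :
    ∃ e', Canonical K S e' := by
  have hZ := h
  obtain ⟨k00, k01, k02, k11, k12, k22, S0, S1, S2⟩ := h
  have k10 := hK.1 (e 1) (e 0)
  have k20 := hK.1 (e 2) (e 0)
  have k21 := hK.1 (e 2) (e 1)
  have vii : ∀ P : ((0 < lam ∧ 0 < mu ∧ mu ≠ Real.sqrt 2 * lam) ∨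
     (mu = Real.sqrt 2 * lam ∧ 0 < mu ∧ a ≠ b)), Canonical K S e := fun P =>
    Or.inr (Or.inr (Or.inr (Or.inr (Or.inr (Or.inr (Or.inl ⟨lam, mu, a, b, hZ, P⟩))))))
  rcases hl.eq_or_lt with rfl | hl <;> rcases hm.eq_or_lt with rfl | hm
  · apply canonical_of_K_zero _ hS
    apply K_eq_zero e
    intro i j
    fin_cases i <;> fin_cases j <;> simp [*]
  · obtain ⟨e', he'⟩ := exists_basis e !![0, 1, 0; 0, 0, 1; 1, 0, 0] (by
      ext i j
      fin_cases i <;> fin_cases j <;> simp [Matrix.mul_apply, Fin.sum_univ_three])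
    have e0 : e' 0 = e 1 := by rw [he']; simp
    have e1 : e' 1 = e 2 := by rw [he']; simp
    have e2 : e' 2 = e 0 := by rw [he']; simp
    exact ⟨e', Or.inr (Or.inr (Or.inr (Or.inr (Or.inl
      ⟨mu, b, a, hm, by simp [S3Form, *]⟩))))⟩
  · exact ⟨e, Or.inr (Or.inr (Or.inl ⟨lam, a, b, hl, by simp [SO2Form, *]⟩))⟩
  · by_cases hlm : mu = Real.sqrt 2 * lam
    · by_cases hab : a = b
      · subst hab
        exact canonical_of_Z3Form_tetrahedral hK e hl (hlm ▸ hZ)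
      · exact ⟨e, vii (Or.inr ⟨hlm, hm, hab⟩)⟩
    · exact ⟨e, vii (Or.inl ⟨hl, hm, hlm⟩)⟩

/-- Theorem 2.2 / Corollary 2.3, canonical-form part: if the stabilizer
of `(K,S)` in `SO(3)` is nontrivial, then with respect to a suitable orthonormal basis the
pair `(K,S)` is in one of the eight listed canonical forms. -/
theorem statement_6 (K : V₃ →ₗ[ℝ] V₃ →ₗ[ℝ] V₃) (S : V₃ →ₗ[ℝ] V₃)
    (hK : IsAdmissibleK K) (hS : IsSymmEndo S)
    (hnt : ∃ g ∈ stab K S, g ≠ 1) :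
    ∃ e : OrthonormalBasis (Fin 3) ℝ V₃,
      (K = 0 ∧ ∃ a : ℝ, S = a • (LinearMap.id : V₃ →ₗ[ℝ] V₃)) ∨
      (K = 0 ∧ ∃ a b : ℝ, a ≠ b ∧
        S (e 0) = a • e 0 ∧ S (e 1) = b • e 1 ∧ S (e 2) = b • e 2) ∨
      (∃ lam a b : ℝ, 0 < lam ∧ SO2Form K S e lam a b) ∨
      (∃ lam a : ℝ, 0 < lam ∧ OTForm K S e lam a a a) ∨
      (∃ lam a b : ℝ, 0 < lam ∧ S3Form K S e lam a b) ∨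
      (∃ lam a b c : ℝ, OTForm K S e lam a b c ∧
        (0 < lam → ¬(a = b ∧ b = c)) ∧
        (lam = 0 → a ≠ b ∧ a ≠ c ∧ b ≠ c)) ∨
      (∃ lam mu a b : ℝ, Z3Form K S e lam mu a b ∧
        ((0 < lam ∧ 0 < mu ∧ mu ≠ Real.sqrt 2 * lam) ∨
         (mu = Real.sqrt 2 * lam ∧ 0 < mu ∧ a ≠ b))) ∨
      (∃ lam mu a b c d : ℝ, Z2Form K S e lam mu a b c d ∧
        ((0 < lam ∧ 0 < mu ∧ lam ≠ mu) ∨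
         (lam = mu ∧ 0 < lam ∧ (b - c)^2 + (b + c - 2*a - 2*d)^2 ≠ 0) ∨
         (lam = 0 ∧ 0 < mu ∧ d ≠ 0) ∨
         (mu = 0 ∧ 0 < lam ∧ (b - c)^2 + d^2 ≠ 0))) := by
  obtain ⟨g, hg, hne⟩ := hnt
  obtain ⟨e, c, s, hcs, hc, h0, h1, h2⟩ := exists_rotation_basis g hg.1 hne
  obtain ⟨k1, k2, q1, q2, h | h⟩ := comps_of_invariant hK hS hg e c s hcs hc h0 h1 h2
  · obtain ⟨k011, k012, q11, q12⟩ := h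
    obtain ⟨e', lam, mu, a, b, hl, hm, hZ⟩ :=
      exists_Z3Form hK hS e k1 k2 q1 q2 k011 k012 q11 q12
    exact canonical_of_Z3Form hK hS e' hl hm hZ
  · obtain ⟨k111, k112, k122, k222⟩ := h
    obtain ⟨e', lam, mu, a, b, c, d, hl, hm, hZ⟩ :=
      exists_Z2Form hK hS e k1 k2 q1 q2 k111 k112 k122 k222
    exact canonical_of_Z2Form hK hS e' hl hm hZ
end
end
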